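/- arXiv:2502.12773 — 2 statements merged into one kernel-verified Lean document; each statement's English description precedes it below -/
import Mathlib

section
/- Let G be a connected bridgeless finite simple cubic graph with n ≥ 8 vertices and m edges whose flow polynomial F(G,t) has only real roots, write F(G,t) = Σ_{i=0}^{m−n+1} c_i t^i, and let the b_i be defined by Σ_{i=0}^{m−n+1} b_i t^i = (t+1)(t+2)^{n/2−2}(t+3)^2. Then b_i = |c_i| for all 0 ≤ i ≤ m−n+1 if and only if G is isomorphic to the graph G*. -/
open Polynomial

/-- The flow polynomial of a finite simple graph `G`:
`F(G,t) = Σ_{Z ⊆ E(G)} (−1)^{m−|Z|} t^{|Z|+c(Z)−n}`, where `c(Z)` is the number of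
connected components of the spanning subgraph with edge set `Z`. -/
noncomputable def flowPoly {V : Type} [Fintype V] (G : SimpleGraph V) : Polynomial ℤ :=
  ∑ Z ∈ G.edgeSet.toFinite.toFinset.powerset,
    (-1 : ℤ) ^ (G.edgeSet.toFinite.toFinset.card - Z.card) •
      (X : Polynomial ℤ) ^
        (Z.card + Nat.card (SimpleGraph.fromEdgeSet (↑Z : Set (Sym2 V))).ConnectedComponent
          - Fintype.card V)

/-- The number of edges of `G`. -/
noncomputable def edgeCount {V : Type} [Fintype V] (G : SimpleGraph V) : ℕ :=
  G.edgeSet.toFinite.toFinset.card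

/-- Vertex type of the graph `G*`: `a1,…,a4`, `b1,…,b4`, and `u_j = (j,0)`, `v_j = (j,1)`
for `j = 0,…,s−1` (0-indexed). -/
abbrev GStarV (s : ℕ) : Type := Fin 4 ⊕ Fin 4 ⊕ (Fin s × Fin 2)

/-- One orientation of each edge of `G*` (symmetrized by `SimpleGraph.fromRel`):
`K4` on the `a`'s minus `a1a2`, `K4` on the `b`'s minus `b1b2`, the ladder edges
`u_j v_j`, `u_j u_{j+1}`, `v_j v_{j+1}`, and the connecting edges
`a1u_1, a2v_1, u_s b1, v_s b2` (or `a1b1, a2b2` when `s = 0`). -/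
def gStarRel (s : ℕ) : GStarV s → GStarV s → Prop
  | Sum.inl i, Sum.inl j => ¬((i = 0 ∧ j = 1) ∨ (i = 1 ∧ j = 0))
  | Sum.inr (Sum.inl i), Sum.inr (Sum.inl j) => ¬((i = 0 ∧ j = 1) ∨ (i = 1 ∧ j = 0))
  | Sum.inr (Sum.inr p), Sum.inr (Sum.inr q) =>
      (p.1 = q.1 ∧ p.2 ≠ q.2) ∨ (p.2 = q.2 ∧ q.1.val = p.1.val + 1)
  | Sum.inl i, Sum.inr (Sum.inr p) =>
      (i = 0 ∧ p.1.val = 0 ∧ p.2 = 0) ∨ (i = 1 ∧ p.1.val = 0 ∧ p.2 = 1)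
  | Sum.inr (Sum.inr p), Sum.inr (Sum.inl i) =>
      (p.1.val + 1 = s ∧ p.2 = 0 ∧ i = 0) ∨ (p.1.val + 1 = s ∧ p.2 = 1 ∧ i = 1)
  | Sum.inl i, Sum.inr (Sum.inl j) =>
      s = 0 ∧ ((i = 0 ∧ j = 0) ∨ (i = 1 ∧ j = 1))
  | _, _ => False

/-- The graph `G*` with `n = 2s + 8` vertices. -/
def gStar (s : ℕ) : SimpleGraph (GStarV s) := SimpleGraph.fromRel (gStarRel s)



section FlowSpace

open Classical in
/-- The space of `K`-valued (unoriented, characteristic two) flows supported in `Z`. -/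
noncomputable def flowSp {V : Type} [Fintype V] (K : Type) [Field K] (Z : Finset (Sym2 V)) :
    Submodule K (Sym2 V → K) where
  carrier := {φ | (∀ e, e ∉ Z → φ e = 0) ∧ ∀ v : V, ∑ e : Sym2 V, (if v ∈ e then φ e else 0) = 0}
  zero_mem' := by simp
  add_mem' := by
    rintro a b ⟨ha, ha'⟩ ⟨hb, hb'⟩
    refine ⟨fun e he => by simp [ha e he, hb e he], fun v => ?_⟩
    have := ha' v
    have h2 := hb' v
    have h3 := congrArg₂ (· + ·) this h2
    simp only [← Finset.sum_add_distrib, add_zero] at h3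
    refine Eq.trans (Finset.sum_congr rfl fun e _ => ?_) h3
    split_ifs <;> simp
  smul_mem' := by
    rintro c a ⟨ha, ha'⟩
    refine ⟨fun e he => by simp [ha e he], fun v => ?_⟩
    have := ha' v
    have h3 := congrArg (c * ·) this
    simp only [Finset.mul_sum, mul_zero] at h3
    refine Eq.trans (Finset.sum_congr rfl fun e _ => ?_) h3
    split_ifs <;> simp

open Classical in
theorem mem_flowSp {V : Type} [Fintype V] {K : Type} [Field K] {Z : Finset (Sym2 V)}
    {φ : Sym2 V → K} : φ ∈ flowSp K Z ↔
      (∀ e, e ∉ Z → φ e = 0) ∧ ∀ v : V, ∑ e : Sym2 V, (if v ∈ e then φ e else 0) = 0 := by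
  constructor
  · rintro ⟨h1, h2⟩
    exact ⟨h1, fun v => by convert h2 v⟩
  · rintro ⟨h1, h2⟩
    exact ⟨h1, fun v => by convert h2 v⟩

theorem flowSp_mono {V : Type} [Fintype V] {K : Type} [Field K] {Y Z : Finset (Sym2 V)}
    (h : Y ⊆ Z) : flowSp K Y ≤ flowSp K Z := by
  intro φ hφ
  rw [mem_flowSp] at hφ ⊢
  exact ⟨fun e he => hφ.1 e fun h' => he (h h'), hφ.2⟩

open Classical in
/-- Incidence matrix. -/
noncomputable def incM {V : Type} (K : Type) [Field K] (Z : Finset (Sym2 V)) :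
    Matrix V Z K := Matrix.of fun v e => if v ∈ e.1 then 1 else 0

open Classical in
theorem ker_incM_T {V : Type} [Fintype V] (K : Type) [Field K] [CharP K 2]
    (Z : Finset (Sym2 V)) (hZ : ∀ e ∈ Z, ¬ e.IsDiag) :
    LinearMap.ker (incM K Z).transpose.mulVecLin =
      LinearMap.range (LinearMap.funLeft K K
        (SimpleGraph.fromEdgeSet (↑Z : Set (Sym2 V))).connectedComponentMk) := by
  have key : ∀ (f : V → K) (u v : V) (h : s(u, v) ∈ Z),
      (incM K Z).transpose.mulVec f ⟨s(u, v), h⟩ = f u + f v := by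
    intro f u v h
    have huv : u ≠ v := by simpa using hZ _ h
    simp only [Matrix.mulVec, dotProduct, Matrix.transpose_apply, incM, Matrix.of_apply, ite_mul,
      one_mul, zero_mul]
    rw [← Finset.sum_filter]
    have : (Finset.univ.filter fun a => a ∈ s(u, v)) = {u, v} := by ext a; simp
    rw [this, Finset.sum_pair huv]
  ext f
  rw [LinearMap.mem_ker, LinearMap.mem_range]
  constructor
  · intro h
    have h1 : ∀ u v, s(u, v) ∈ Z → f u = f v := by
      intro u v huv
      have := key f u v huv
      rw [← Matrix.mulVecLin_apply, h] at this
      have h2 : f u + f v = 0 := by rw [← this]; rfl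
      rwa [CharTwo.add_eq_zero] at h2
    have h3 : ∀ u v, (SimpleGraph.fromEdgeSet (↑Z : Set (Sym2 V))).Reachable u v → f u = f v := by
      rintro u v ⟨p⟩
      induction p with
      | nil => rfl
      | cons h _ ih =>
        rw [SimpleGraph.fromEdgeSet_adj] at h
        exact (h1 _ _ (by simpa using h.1)).trans ih
    refine ⟨fun c => c.lift f ?_, ?_⟩
    · intro v w p _
      exact h3 v w ⟨p⟩
    · ext v; rfl
  · rintro ⟨g, rfl⟩
    ext ⟨e, he⟩
    induction e using Sym2.ind with
    | _ u v =>
      rw [Matrix.mulVecLin_apply, key]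
      have huv : u ≠ v := by simpa using hZ _ he
      have : (SimpleGraph.fromEdgeSet (↑Z : Set (Sym2 V))).connectedComponentMk u =
          (SimpleGraph.fromEdgeSet (↑Z : Set (Sym2 V))).connectedComponentMk v := by
        apply SimpleGraph.ConnectedComponent.sound
        exact SimpleGraph.Adj.reachable (by rw [SimpleGraph.fromEdgeSet_adj]; exact ⟨by simpa using he, huv⟩)
      simp [LinearMap.funLeft_apply, this, CharTwo.add_self_eq_zero]

open Classical in
/-- Flows as kernel of the incidence matrix. -/
noncomputable def flowEquiv {V : Type} [Fintype V] (K : Type) [Field K] (Z : Finset (Sym2 V)) :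
    flowSp K Z ≃ₗ[K] LinearMap.ker (incM K Z).mulVecLin where
  toFun φ := ⟨fun e => φ.1 e, by
    have h := (mem_flowSp.1 φ.2)
    rw [LinearMap.mem_ker]
    ext v
    simp only [Matrix.mulVecLin_apply, Matrix.mulVec, dotProduct, incM, Matrix.of_apply, ite_mul,
      one_mul, zero_mul, Pi.zero_apply]
    refine Eq.trans ?_ (h.2 v)
    rw [← Finset.sum_subset (Finset.subset_univ Z), ← Finset.sum_coe_sort Z]
    intro e _ he
    simp [h.1 e he]⟩
  map_add' _ _ := rfl
  map_smul' _ _ := rfl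
  invFun g := ⟨fun e => if h : e ∈ Z then g.1 ⟨e, h⟩ else 0, by
    rw [mem_flowSp]
    refine ⟨fun e he => by simp [he], fun v => ?_⟩
    have h := g.2
    rw [LinearMap.mem_ker] at h
    have h2 := congrFun h v
    simp only [Matrix.mulVecLin_apply, Matrix.mulVec, dotProduct, incM, Matrix.of_apply, ite_mul,
      one_mul, zero_mul, Pi.zero_apply] at h2
    refine Eq.trans ?_ h2
    rw [← Finset.sum_subset (Finset.subset_univ Z), ← Finset.sum_coe_sort Z]
    · refine Finset.sum_congr rfl fun e _ => ?_
      simp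
    · intro e _ he
      simp [he]⟩
  left_inv φ := by
    have h := (mem_flowSp.1 φ.2)
    ext e
    by_cases he : e ∈ Z
    · simp [he]
    · simp [he, h.1 e he]
  right_inv g := by
    ext e
    simp

theorem finrank_flowSp {V : Type} [Fintype V] (K : Type) [Field K] [CharP K 2]
    (Z : Finset (Sym2 V)) (hZ : ∀ e ∈ Z, ¬ e.IsDiag) :
    Module.finrank K (flowSp K Z) + Fintype.card V = Z.card +
      Nat.card (SimpleGraph.fromEdgeSet (↑Z : Set (Sym2 V))).ConnectedComponent := by
  classical
  rw [(flowEquiv K Z).finrank_eq]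
  have h1 := LinearMap.finrank_range_add_finrank_ker (incM K Z).mulVecLin
  have h2 := LinearMap.finrank_range_add_finrank_ker (incM K Z).transpose.mulVecLin
  have h3 := Matrix.rank_transpose (incM K Z)
  rw [Matrix.rank, Matrix.rank] at h3
  have hs : Function.Surjective
      (SimpleGraph.fromEdgeSet (↑Z : Set (Sym2 V))).connectedComponentMk := Quot.mk_surjective
  rw [ker_incM_T K Z hZ, LinearMap.finrank_range_of_inj
    (LinearMap.funLeft_injective_of_surjective K K _ hs)] at h2
  simp only [Module.finrank_fintype_fun_eq_card, Fintype.card_coe] at h1 h2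
  rw [← Nat.card_eq_fintype_card] at h2
  omega

end FlowSpace


section Count

/-- Edge finset as used in the statement. -/
noncomputable def eFin {V : Type} [Fintype V] (G : SimpleGraph V) : Finset (Sym2 V) :=
  G.edgeSet.toFinite.toFinset

theorem mem_eFin {V : Type} [Fintype V] {G : SimpleGraph V} {u v : V} :
    s(u, v) ∈ eFin G ↔ G.Adj u v := by
  simp [eFin]

theorem eFin_not_diag {V : Type} [Fintype V] {G : SimpleGraph V} {Z : Finset (Sym2 V)}
    (hZ : Z ⊆ eFin G) : ∀ e ∈ Z, ¬ e.IsDiag := by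
  intro e he
  have := hZ he
  simp only [eFin, Set.Finite.mem_toFinset] at this
  exact G.not_isDiag_of_mem_edgeSet this

open Classical in
theorem flowPoly_eq {V : Type} [Fintype V] (G : SimpleGraph V) (K : Type) [Field K] [CharP K 2] :
    flowPoly G = ∑ Z ∈ (eFin G).powerset, (-1 : ℤ) ^ ((eFin G).card - Z.card) •
      (X : Polynomial ℤ) ^ (Module.finrank K (flowSp K Z)) := by
  unfold flowPoly
  refine Finset.sum_congr rfl fun Z hZ => ?_
  have hZ' : Z ⊆ eFin G := Finset.mem_powerset.1 hZ
  have := finrank_flowSp K Z (eFin_not_diag hZ')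
  rw [← this, Nat.add_sub_cancel]
  rfl

open Classical in
theorem eval_flowPoly_aux {V : Type} [Fintype V] (G : SimpleGraph V) (K : Type) [Field K]
    [Fintype K] [CharP K 2] :
    (flowPoly G).eval (Fintype.card K : ℤ) =
      (Finset.univ.filter fun φ : Sym2 V → K =>
        φ ∈ flowSp K (eFin G) ∧ ∀ e ∈ eFin G, φ e ≠ 0).card := by
  rw [flowPoly_eq G K, Polynomial.eval_finsetSum]
  have h1 : ∀ Z ∈ (eFin G).powerset,
      ((-1 : ℤ) ^ ((eFin G).card - Z.card) •
        (X : Polynomial ℤ) ^ (Module.finrank K (flowSp K Z))).eval (Fintype.card K : ℤ) =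
      ∑ φ : Sym2 V → K, (if φ ∈ flowSp K (eFin G) then
        (∏ e ∈ Z, (1 : ℤ)) * ∏ e ∈ (eFin G) \ Z, (-(if φ e = 0 then 1 else 0)) else 0) := by
    intro Z hZ
    have hZ' : Z ⊆ eFin G := Finset.mem_powerset.1 hZ
    have hc : ((Fintype.card K : ℤ)) ^ (Module.finrank K (flowSp K Z)) =
        ∑ φ : Sym2 V → K, if φ ∈ flowSp K Z then (1 : ℤ) else 0 := by
      have := Module.card_eq_pow_finrank (K := K) (V := flowSp K Z)
      rw [← Nat.cast_pow, ← this, Fintype.card_subtype, Finset.sum_boole]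
    rw [Polynomial.eval_smul, Polynomial.eval_pow, Polynomial.eval_X, hc, smul_eq_mul,
      Finset.mul_sum]
    refine Finset.sum_congr rfl fun φ _ => ?_
    have hiff : φ ∈ flowSp K Z ↔ φ ∈ flowSp K (eFin G) ∧ ∀ e ∈ eFin G \ Z, φ e = 0 := by
      rw [mem_flowSp, mem_flowSp]
      constructor
      · rintro ⟨h, h'⟩
        exact ⟨⟨fun e he => h e fun h2 => he (hZ' h2), h'⟩, fun e he =>
          h e (Finset.mem_sdiff.1 he).2⟩
      · rintro ⟨⟨h, h'⟩, h2⟩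
        refine ⟨fun e he => ?_, h'⟩
        by_cases hE : e ∈ eFin G
        · exact h2 e (Finset.mem_sdiff.2 ⟨hE, he⟩)
        · exact h e hE
    by_cases hφ : φ ∈ flowSp K (eFin G)
    · simp only [hiff, hφ, true_and, if_true, Finset.prod_const_one, one_mul]
      rw [Finset.prod_neg, Finset.card_sdiff_of_subset hZ', Finset.prod_boole]
      congr 1
      split_ifs <;> rfl
    · simp [hiff, hφ]
  rw [Finset.sum_congr rfl h1, Finset.sum_comm, Finset.card_filter, Nat.cast_sum]
  refine Finset.sum_congr rfl fun φ _ => ?_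
  by_cases hφ : φ ∈ flowSp K (eFin G)
  · simp only [hφ, if_true, true_and]
    rw [← Finset.prod_add]
    have : ∀ e, (1 : ℤ) + -(if φ e = 0 then 1 else 0) = if φ e ≠ 0 then 1 else 0 := by
      intro e; split_ifs <;> simp_all
    simp only [this]
    rw [Finset.prod_boole]
    simp
  · simp [hφ]

/-- Nowhere-zero flows as symmetric functions. -/
abbrev nzf {V : Type} [Fintype V] (G : SimpleGraph V) (K : Type) [Field K] : Type :=
  {ψ : V → V → K // (∀ u v, ψ u v = ψ v u) ∧ (∀ u v, ψ u v ≠ 0 ↔ G.Adj u v) ∧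
    ∀ u, ∑ v, ψ u v = 0}

open Classical in
theorem sum_incident {V : Type} [Fintype V] {K : Type} [Field K] (φ : Sym2 V → K) (v : V) :
    ∑ e : Sym2 V, (if v ∈ e then φ e else 0) = ∑ w, φ s(v, w) := by
  rw [← Finset.sum_filter]
  have : (Finset.univ.filter fun e : Sym2 V => v ∈ e) =
      Finset.univ.image fun w => s(v, w) := by
    ext e
    simp only [Finset.mem_filter, Finset.mem_univ, true_and, Finset.mem_image, Sym2.mem_iff_exists]
    exact ⟨fun ⟨c, h⟩ => ⟨c, h.symm⟩, fun ⟨c, h⟩ => ⟨c, h.symm⟩⟩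
  rw [this, Finset.sum_image]
  intro a _ b _ h
  exact Sym2.congr_right.1 h

theorem eval_flowPoly {V : Type} [Fintype V] (G : SimpleGraph V) (K : Type) [Field K]
    [Fintype K] [CharP K 2] :
    (flowPoly G).eval (Fintype.card K : ℤ) = Nat.card (nzf G K) := by
  classical
  rw [eval_flowPoly_aux, ← Fintype.card_subtype, ← Nat.card_eq_fintype_card]
  congr 1
  refine Nat.card_congr ⟨fun φ => ⟨fun u v => φ.1 s(u, v), ?_, ?_, ?_⟩,
    fun ψ => ⟨Sym2.lift ⟨ψ.1, ψ.2.1⟩, ?_, ?_⟩, ?_, ?_⟩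
  · intro u v
    exact congrArg φ.1 Sym2.eq_swap
  · intro u v
    obtain ⟨h1, h2⟩ := φ.2
    rw [mem_flowSp] at h1
    constructor
    · intro h
      by_contra h'
      exact h (h1.1 _ (by rwa [mem_eFin]))
    · intro h
      exact h2 _ (mem_eFin.2 h)
  · intro u
    obtain ⟨h1, h2⟩ := φ.2
    rw [mem_flowSp] at h1
    rw [← sum_incident]
    exact h1.2 u
  · rw [mem_flowSp]
    constructor
    · intro e
      induction e using Sym2.ind with
      | _ u v =>
        intro h
        rw [mem_eFin, ← ψ.2.2.1] at h
        simpa using h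
    · intro v
      rw [sum_incident]
      exact ψ.2.2.2 v
  · intro e
    induction e using Sym2.ind with
    | _ u v =>
      intro h
      rw [mem_eFin, ← ψ.2.2.1] at h
      simpa using h
  · intro φ
    apply Subtype.ext
    funext e
    induction e using Sym2.ind with
    | _ u v => rfl
  · intro ψ
    rfl

theorem nzf_iso {V W : Type} [Fintype V] [Fintype W] {G : SimpleGraph V} {H : SimpleGraph W}
    (f : G ≃g H) (K : Type) [Field K] : Nat.card (nzf G K) = Nat.card (nzf H K) := by
  refine Nat.card_congr ⟨fun ψ => ⟨fun u v => ψ.1 (f.symm u) (f.symm v), ?_, ?_, ?_⟩,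
    fun ψ => ⟨fun u v => ψ.1 (f u) (f v), ?_, ?_, ?_⟩, ?_, ?_⟩
  · intro u v; exact ψ.2.1 _ _
  · intro u v; rw [ψ.2.2.1]; exact f.symm.map_adj_iff
  · intro u
    refine Eq.trans ?_ (ψ.2.2.2 (f.symm u))
    exact Equiv.sum_comp f.symm.toEquiv (fun w => ψ.1 (f.symm u) w)
  · intro u v; exact ψ.2.1 _ _
  · intro u v; rw [ψ.2.2.1]; exact f.map_adj_iff
  · intro u
    refine Eq.trans ?_ (ψ.2.2.2 (f u))
    exact Equiv.sum_comp f.toEquiv (fun w => ψ.1 (f u) w)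
  · intro ψ; apply Subtype.ext; funext u v; simp
  · intro ψ; apply Subtype.ext; funext u v; simp

end Count


section Cuts

open Classical in
/-- The edge cut determined by `X`. -/
noncomputable def ecut {V : Type} [Fintype V] (G : SimpleGraph V) (S : Finset V) :
    Finset (Sym2 V) :=
  (eFin G).filter fun e => ∃ u v, e = s(u, v) ∧ u ∈ S ∧ v ∉ S

variable {V : Type} [Fintype V] {G : SimpleGraph V}

theorem mem_ecut {S : Finset V} {u v : V} :
    s(u, v) ∈ ecut G S ↔ G.Adj u v ∧ ((u ∈ S ∧ v ∉ S) ∨ (v ∈ S ∧ u ∉ S)) := by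
  classical
  simp only [ecut, Finset.mem_filter, mem_eFin]
  refine and_congr_right fun _ => ?_
  constructor
  · rintro ⟨a, b, h, ha, hb⟩
    rcases Sym2.eq_iff.1 h with ⟨rfl, rfl⟩ | ⟨rfl, rfl⟩
    · exact Or.inl ⟨ha, hb⟩
    · exact Or.inr ⟨ha, hb⟩
  · rintro (⟨h1, h2⟩ | ⟨h1, h2⟩)
    · exact ⟨u, v, rfl, h1, h2⟩
    · exact ⟨v, u, Sym2.eq_swap, h1, h2⟩

theorem ecut_sub {S : Finset V} : ecut G S ⊆ eFin G := by
  classical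
  exact Finset.filter_subset _ _

theorem mem_ecut_exists {S : Finset V} {e : Sym2 V} (h : e ∈ ecut G S) :
    ∃ u v, e = s(u, v) ∧ G.Adj u v ∧ u ∈ S ∧ v ∉ S := by
  classical
  rw [ecut, Finset.mem_filter] at h
  obtain ⟨h, u, v, rfl, h1, h2⟩ := h
  exact ⟨u, v, rfl, mem_eFin.1 h, h1, h2⟩

open Classical in
theorem ecut_compl {S : Finset V} : ecut G Sᶜ = ecut G S := by
  ext e
  induction e using Sym2.ind with
  | _ u v => simp only [mem_ecut, Finset.mem_compl]; tauto

open Classical in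
theorem mem_ecut_symmDiff {S T : Finset V} (e : Sym2 V) :
    e ∈ ecut G (symmDiff S T) ↔ ¬ (e ∈ ecut G S ↔ e ∈ ecut G T) := by
  induction e using Sym2.ind with
  | _ u v => simp only [mem_ecut, Finset.mem_symmDiff]; tauto

theorem exists_mem_ecut_of_reachable {H : SimpleGraph V} (hH : H ≤ G) {S : Finset V} {u v : V}
    (hu : u ∈ S) (hv : v ∉ S) (h : H.Reachable u v) :
    ∃ a b, H.Adj a b ∧ a ∈ S ∧ b ∉ S ∧ s(a, b) ∈ ecut G S := by
  obtain ⟨p⟩ := h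
  obtain ⟨d, -, h1, h2⟩ := p.exists_boundary_dart (↑S) (by simpa using hu) (by simpa using hv)
  refine ⟨d.fst, d.snd, d.adj, by simpa using h1, by simpa using h2, ?_⟩
  rw [mem_ecut]
  exact ⟨hH d.adj, Or.inl ⟨by simpa using h1, by simpa using h2⟩⟩

theorem two_le_ecut (hconn : G.Connected) (hbr : ∀ e : Sym2 V, ¬ G.IsBridge e) {S : Finset V}
    (h1 : S.Nonempty) (h2 : ∃ v, v ∉ S) : 2 ≤ (ecut G S).card := by
  obtain ⟨u, hu⟩ := h1
  obtain ⟨v, hv⟩ := h2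
  obtain ⟨a, b, hab, ha, hb, he⟩ := exists_mem_ecut_of_reachable le_rfl hu hv (hconn.preconnected u v)
  have h3 := hbr s(a, b)
  rw [SimpleGraph.isBridge_iff, not_not] at h3
  obtain ⟨c, d, hcd, hc, hd, hf⟩ :=
    exists_mem_ecut_of_reachable (G.deleteEdges_le _) ha hb h3
  rw [← Nat.lt_iff_add_one_le, Finset.one_lt_card]
  refine ⟨_, he, _, hf, ?_⟩
  rw [SimpleGraph.deleteEdges_adj] at hcd
  intro h
  exact hcd.2 h.symm

/-- Two edges are equivalent if equal or forming a 2-edge-cut. -/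
def ceq (G : SimpleGraph V) (e f : Sym2 V) : Prop :=
  e = f ∨ ∃ S : Finset V, ∀ x, x ∈ ecut G S ↔ (x = e ∨ x = f)

theorem ceq_equiv (G : SimpleGraph V) : Equivalence (ceq G) where
  refl e := Or.inl rfl
  symm := by
    rintro e f (rfl | ⟨S, h⟩)
    · exact Or.inl rfl
    · exact Or.inr ⟨S, fun x => by rw [h, or_comm]⟩
  trans := by
    classical
    rintro e f g (rfl | ⟨S, h⟩) (rfl | ⟨T, h'⟩)
    · exact Or.inl rfl
    · exact Or.inr ⟨T, h'⟩
    · exact Or.inr ⟨S, h⟩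
    · by_cases heg : e = g
      · exact Or.inl heg
      by_cases hef : e = f
      · subst hef; exact Or.inr ⟨T, h'⟩
      by_cases hfg : f = g
      · subst hfg; exact Or.inr ⟨S, h⟩
      refine Or.inr ⟨symmDiff S T, fun x => ?_⟩
      rw [mem_ecut_symmDiff, h, h']
      grind

/-- The setoid. -/
def ceqSetoid (G : SimpleGraph V) : Setoid (Sym2 V) := ⟨ceq G, ceq_equiv G⟩

/-- Representative of the class. -/
noncomputable def crep (G : SimpleGraph V) (e : Sym2 V) : Sym2 V :=
  (Quotient.mk (ceqSetoid G) e).out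

theorem crep_ceq (e : Sym2 V) : ceq G (crep G e) e :=
  Quotient.mk_out (s := ceqSetoid G) e

theorem crep_eq_iff {e f : Sym2 V} : crep G e = crep G f ↔ ceq G e f := by
  constructor
  · intro h
    have h1 := crep_ceq (G := G) e
    rw [h] at h1
    exact (ceq_equiv G).trans ((ceq_equiv G).symm h1) (crep_ceq f)
  · intro h
    unfold crep
    rw [Quotient.sound (s := ceqSetoid G) h]

theorem crep_crep (e : Sym2 V) : crep G (crep G e) = crep G e :=
  crep_eq_iff.2 (crep_ceq e)

theorem ceq_mem {e f : Sym2 V} (h : ceq G e f) (he : e ∈ eFin G) : f ∈ eFin G := by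
  rcases h with rfl | ⟨S, h⟩
  · exact he
  · exact ecut_sub ((h f).2 (Or.inr rfl))

theorem crep_mem {e : Sym2 V} (he : e ∈ eFin G) : crep G e ∈ eFin G :=
  ceq_mem ((ceq_equiv G).symm (crep_ceq e)) he

open Classical in
/-- the set of representatives -/
noncomputable def reps (G : SimpleGraph V) : Finset (Sym2 V) := (eFin G).image (crep G)

open Classical in
theorem reps_sub : reps G ⊆ eFin G := by
  intro e he
  obtain ⟨f, hf, rfl⟩ := Finset.mem_image.1 he
  exact crep_mem hf

theorem mem_reps {e : Sym2 V} (he : e ∈ eFin G) : e ∈ reps G ↔ crep G e = e := by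
  classical
  constructor
  · intro h
    obtain ⟨f, hf, rfl⟩ := Finset.mem_image.1 h
    exact crep_crep f
  · intro h
    exact Finset.mem_image.2 ⟨e, he, h⟩

theorem cc_card_one {H : SimpleGraph V} (h : H.Connected) : Nat.card H.ConnectedComponent = 1 := by
  have := h.preconnected.subsingleton_connectedComponent
  have := h.nonempty
  rw [Nat.card_eq_one_iff_unique]
  exact ⟨inferInstance, inferInstance⟩

theorem cc_card_two {H : SimpleGraph V} {u v : V} (h : ¬ H.Reachable u v) :
    2 ≤ Nat.card H.ConnectedComponent := by
  rw [← Nat.lt_iff_add_one_le, Finite.one_lt_card_iff_nontrivial]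
  exact ⟨⟨H.connectedComponentMk u, H.connectedComponentMk v, fun h' =>
    h (SimpleGraph.ConnectedComponent.exact h')⟩⟩

theorem fromEdge_eFin : SimpleGraph.fromEdgeSet (↑(eFin G) : Set (Sym2 V)) = G := by
  ext u v
  rw [SimpleGraph.fromEdgeSet_adj, Finset.mem_coe, mem_eFin]
  exact ⟨fun h => h.1, fun h => ⟨h, h.ne⟩⟩

open Classical in
theorem fromEdge_sdiff (Y : Finset (Sym2 V)) :
    SimpleGraph.fromEdgeSet (↑(eFin G \ Y) : Set (Sym2 V)) = G.deleteEdges ↑Y := by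
  ext u v
  rw [SimpleGraph.fromEdgeSet_adj, Finset.mem_coe, Finset.mem_sdiff, mem_eFin,
    SimpleGraph.deleteEdges_adj, Finset.mem_coe]
  exact ⟨fun h => h.1, fun h => ⟨h, h.1.ne⟩⟩

theorem deleteEdge_connected (hconn : G.Connected) (hbr : ∀ e : Sym2 V, ¬ G.IsBridge e)
    (e : Sym2 V) : (G.deleteEdges {e}).Connected := by
  classical
  have := hconn.nonempty
  refine ⟨fun u v => ?_⟩
  by_contra hr
  have h2 := two_le_ecut hconn hbr (S := Finset.univ.filter fun w => (G.deleteEdges {e}).Reachable u w)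
    ⟨u, by simp⟩ ⟨v, by simpa using hr⟩
  rw [← Nat.lt_iff_add_one_le, Finset.one_lt_card] at h2
  obtain ⟨a, ha, b, hb, hab⟩ := h2
  have key : ∀ f ∈ ecut G (Finset.univ.filter fun w => (G.deleteEdges {e}).Reachable u w), f = e := by
    intro f hf
    obtain ⟨x, y, rfl, hxy, hx, hy⟩ := mem_ecut_exists hf
    by_contra hne
    simp only [Finset.mem_filter, Finset.mem_univ, true_and] at hx hy
    exact hy (hx.trans (SimpleGraph.Adj.reachable
      (by rw [SimpleGraph.deleteEdges_adj]; exact ⟨hxy, hne⟩)))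
  exact hab ((key a ha).trans (key b hb).symm)

open Classical in
theorem finrank_all (hconn : G.Connected) (K : Type) [Field K] [CharP K 2] :
    Module.finrank K (flowSp K (eFin G)) + Fintype.card V = (eFin G).card + 1 := by
  rw [finrank_flowSp K _ (eFin_not_diag subset_rfl), fromEdge_eFin, cc_card_one hconn]

open Classical in
theorem finrank_one (hconn : G.Connected) (hbr : ∀ e : Sym2 V, ¬ G.IsBridge e)
    (K : Type) [Field K] [CharP K 2] {e : Sym2 V} (he : e ∈ eFin G) :
    Module.finrank K (flowSp K (eFin G \ {e})) + Fintype.card V = (eFin G).card := by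
  rw [finrank_flowSp K _ (eFin_not_diag Finset.sdiff_subset), fromEdge_sdiff, Finset.coe_singleton,
    cc_card_one (deleteEdge_connected hconn hbr e), Finset.card_sdiff_of_subset (by simpa using he)]
  have : 0 < (eFin G).card := Finset.card_pos.2 ⟨e, he⟩
  simp; omega

open Classical in
theorem flow_pair (hconn : G.Connected) (hbr : ∀ e : Sym2 V, ¬ G.IsBridge e)
    (K : Type) [Field K] [CharP K 2] {e f : Sym2 V} (he : e ∈ eFin G) (h : ceq G e f) :
    flowSp K (eFin G \ {e}) ≤ flowSp K (eFin G \ {f}) := by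
  by_cases hef : e = f
  · subst hef; exact le_rfl
  have hf := ceq_mem h he
  rcases h with h | ⟨S, hS⟩
  · exact absurd h hef
  have h1 : flowSp K (eFin G \ {e, f}) ≤ flowSp K (eFin G \ {e}) :=
    flowSp_mono (by intro x; simp; tauto)
  have h2 : flowSp K (eFin G \ {e, f}) ≤ flowSp K (eFin G \ {f}) :=
    flowSp_mono (by intro x; simp; tauto)
  have h3 := finrank_flowSp K (eFin G \ {e, f}) (eFin_not_diag Finset.sdiff_subset)
  have hsub : {e, f} ⊆ eFin G := by intro x; simp; rintro (rfl | rfl) <;> assumption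
  have hc2 : ({e, f} : Finset (Sym2 V)).card = 2 := Finset.card_pair hef
  have hle := Finset.card_le_card hsub
  rw [fromEdge_sdiff, Finset.card_sdiff_of_subset hsub, hc2] at h3
  obtain ⟨a, b, rfl, hab, ha, hb⟩ := mem_ecut_exists ((hS e).2 (Or.inl rfl))
  have hr : ¬ (G.deleteEdges (↑({s(a, b), f} : Finset (Sym2 V)))).Reachable a b := by
    intro hr
    obtain ⟨c, d, hcd, -, -, hm⟩ := exists_mem_ecut_of_reachable (G.deleteEdges_le _) ha hb hr
    rw [SimpleGraph.deleteEdges_adj] at hcd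
    rw [hS] at hm
    apply hcd.2
    simpa using hm
  have h4 := cc_card_two hr
  have h5 := finrank_one hconn hbr K he
  rw [← Submodule.eq_of_le_of_finrank_le h1 (by omega)]
  exact h2

open Classical in
theorem flow_set_iff (hconn : G.Connected) (hbr : ∀ e : Sym2 V, ¬ G.IsBridge e)
    (K : Type) [Field K] [CharP K 2] (hm : Fintype.card V ≤ (eFin G).card) {Y : Finset (Sym2 V)}
    (hY : Y ⊆ eFin G) :
    Module.finrank K (flowSp K (eFin G \ Y)) = (eFin G).card - Fintype.card V ↔
      Y.Nonempty ∧ ∀ e ∈ Y, ∀ f ∈ Y, ceq G e f := by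
  constructor
  · intro h
    refine ⟨?_, ?_⟩
    · rw [Finset.nonempty_iff_ne_empty]
      rintro rfl
      have := finrank_all hconn K
      rw [Finset.sdiff_empty] at h
      omega
    · intro e he f hf
      by_cases hef : e = f
      · exact Or.inl hef
      have h0 : flowSp K (eFin G \ Y) ≤ flowSp K (eFin G \ {e, f}) :=
        flowSp_mono (by
          apply Finset.sdiff_subset_sdiff subset_rfl
          intro x; simp; rintro (rfl | rfl) <;> assumption)
      have h0' := Submodule.finrank_mono h0
      have h3 := finrank_flowSp K (eFin G \ {e, f}) (eFin_not_diag Finset.sdiff_subset)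
      have hsub : {e, f} ⊆ eFin G := by
        intro x; simp; rintro (rfl | rfl)
        · exact hY he
        · exact hY hf
      have hc2 : ({e, f} : Finset (Sym2 V)).card = 2 := Finset.card_pair hef
      have hle := Finset.card_le_card hsub
      rw [fromEdge_sdiff, Finset.card_sdiff_of_subset hsub, hc2] at h3
      have hnc : ¬ (G.deleteEdges (↑({e, f} : Finset (Sym2 V)))).Preconnected := by
        intro hp
        have := hconn.nonempty
        have := cc_card_one ⟨hp⟩
        omega
      rw [SimpleGraph.Preconnected] at hnc
      push Not at hnc
      obtain ⟨u, v, huv⟩ := hnc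
      right
      refine ⟨Finset.univ.filter fun w => (G.deleteEdges (↑({e, f} : Finset (Sym2 V)))).Reachable u w, ?_⟩
      have h2 := two_le_ecut hconn hbr (S := Finset.univ.filter fun w =>
        (G.deleteEdges (↑({e, f} : Finset (Sym2 V)))).Reachable u w)
        ⟨u, by simp⟩ ⟨v, by simpa using huv⟩
      have key : ecut G (Finset.univ.filter fun w =>
        (G.deleteEdges (↑({e, f} : Finset (Sym2 V)))).Reachable u w) ⊆ {e, f} := by
        intro g hg
        obtain ⟨x, y, rfl, hxy, hx, hy⟩ := mem_ecut_exists hg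
        by_contra hne
        simp only [Finset.mem_filter, Finset.mem_univ, true_and] at hx hy
        exact hy (hx.trans (SimpleGraph.Adj.reachable
          (by rw [SimpleGraph.deleteEdges_adj]; exact ⟨hxy, by simpa using hne⟩)))
      rw [Finset.eq_of_subset_of_card_le key (by omega)]
      simp
  · rintro ⟨⟨e, he⟩, h⟩
    have h1 := finrank_one hconn hbr K (hY he)
    have : flowSp K (eFin G \ Y) = flowSp K (eFin G \ {e}) := by
      apply le_antisymm
      · exact flowSp_mono (Finset.sdiff_subset_sdiff subset_rfl (by simpa using he))
      · intro φ hφ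
        have h2 := mem_flowSp.1 hφ
        rw [mem_flowSp]
        refine ⟨fun x hx => ?_, h2.2⟩
        by_cases hxY : x ∈ Y
        · have := flow_pair hconn hbr K (hY he) (h e he x hxY) hφ
          rw [mem_flowSp] at this
          exact this.1 x (by simp)
        · apply h2.1
          simp only [Finset.mem_sdiff, not_and, not_not] at hx ⊢
          intro hE
          exact absurd (hx hE) hxY
    rw [this]
    omega

theorem coeff_flowPoly (hconn : G.Connected) (hbr : ∀ e : Sym2 V, ¬ G.IsBridge e)
    (hm : Fintype.card V ≤ (eFin G).card) :
    (flowPoly G).coeff ((eFin G).card - Fintype.card V) = -(reps G).card := by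
  classical
  rw [flowPoly_eq G (ZMod 2), Polynomial.finsetSum_coeff]
  have h1 : ∑ Z ∈ (eFin G).powerset, ((-1 : ℤ) ^ ((eFin G).card - Z.card) •
      (X : Polynomial ℤ) ^ (Module.finrank (ZMod 2) (flowSp (ZMod 2) Z))).coeff
        ((eFin G).card - Fintype.card V) =
      ∑ Y ∈ (eFin G).powerset, (-1 : ℤ) ^ Y.card *
        (if Y.Nonempty ∧ ∀ e ∈ Y, ∀ f ∈ Y, ceq G e f then 1 else 0) := by
    refine Finset.sum_bij' (fun Z _ => eFin G \ Z) (fun Z _ => eFin G \ Z) ?_ ?_ ?_ ?_ ?_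
    · intro Z _; simp
    · intro Z _; simp
    · intro Z hZ; simpa using hZ
    · intro Z hZ; simpa using hZ
    · intro Z hZ
      have hZ' := Finset.mem_powerset.1 hZ
      have := flow_set_iff hconn hbr (ZMod 2) hm (Y := eFin G \ Z) Finset.sdiff_subset
      rw [Finset.sdiff_sdiff_eq_self hZ'] at this
      rw [Polynomial.coeff_smul, Polynomial.coeff_X_pow, Finset.card_sdiff_of_subset hZ', smul_eq_mul]
      congr 1
      by_cases hc : Module.finrank (ZMod 2) (flowSp (ZMod 2) Z) = (eFin G).card - Fintype.card V
      · rw [if_pos hc.symm, if_pos (this.1 hc)]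
      · rw [if_neg (fun h => hc h.symm), if_neg (fun h => hc (this.2 h))]
  rw [h1]
  have h2 : ∀ Y ∈ (eFin G).powerset, (-1 : ℤ) ^ Y.card *
        (if Y.Nonempty ∧ ∀ e ∈ Y, ∀ f ∈ Y, ceq G e f then 1 else 0) =
      ∑ ρ ∈ reps G, (if Y ⊆ (eFin G).filter (fun e => crep G e = ρ) then
        ((-1 : ℤ) ^ Y.card - if Y = ∅ then 1 else 0) else 0) := by
    intro Y hY
    have hY' := Finset.mem_powerset.1 hY
    rcases Y.eq_empty_or_nonempty with rfl | hne
    · simp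
    · have hne' : Y ≠ ∅ := hne.ne_empty
      simp only [hne, hne', true_and, if_false, sub_zero]
      obtain ⟨e, he⟩ := hne
      by_cases hall : ∀ e ∈ Y, ∀ f ∈ Y, ceq G e f
      · rw [if_pos hall, Finset.sum_eq_single (crep G e)]
        · rw [if_pos, mul_one]
          intro f hf
          rw [Finset.mem_filter]
          exact ⟨hY' hf, crep_eq_iff.2 (hall f hf e he)⟩
        · intro ρ _ hρ
          rw [if_neg]
          intro hsub
          exact hρ (Finset.mem_filter.1 (hsub he)).2.symm
        · intro h
          exact absurd (Finset.mem_image_of_mem _ (hY' he)) h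
      · rw [if_neg hall, mul_zero]
        symm
        apply Finset.sum_eq_zero
        intro ρ _
        rw [if_neg]
        intro hsub
        apply hall
        intro a ha b hb
        rw [← crep_eq_iff, (Finset.mem_filter.1 (hsub ha)).2, (Finset.mem_filter.1 (hsub hb)).2]
  rw [Finset.sum_congr rfl h2, Finset.sum_comm]
  have h3 : ∀ ρ ∈ reps G, ∑ Y ∈ (eFin G).powerset,
      (if Y ⊆ (eFin G).filter (fun e => crep G e = ρ) then
        ((-1 : ℤ) ^ Y.card - if Y = ∅ then 1 else 0) else 0) = -1 := by
    intro ρ hρ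
    obtain ⟨e, he, rfl⟩ := Finset.mem_image.1 hρ
    have hT : ((eFin G).filter (fun f => crep G f = crep G e)).Nonempty :=
      ⟨e, by simp [he]⟩
    rw [← Finset.sum_filter]
    have : (eFin G).powerset.filter (fun Y => Y ⊆ (eFin G).filter (fun f => crep G f = crep G e)) =
        ((eFin G).filter (fun f => crep G f = crep G e)).powerset := by
      ext Y
      simp only [Finset.mem_filter, Finset.mem_powerset]
      exact ⟨fun h => h.2, fun h => ⟨h.trans (Finset.filter_subset _ _), h⟩⟩
    rw [this, Finset.sum_sub_distrib, Finset.sum_powerset_neg_one_pow_card_of_nonempty hT,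
      Finset.sum_ite_eq' ]
    simp
  rw [Finset.sum_congr rfl h3]
  simp

end Cuts


section Laminar

theorem laminar_chain {V : Type} [Fintype V] [DecidableEq V] (L : Finset (Finset V)) (s : ℕ)
    (hL : L.card = s + 1) (hn : Fintype.card V = 2 * s + 8) (A : Finset V) (hA : 4 ≤ A.card)
    (hAd : ∀ Q ∈ L, Disjoint A Q)
    (hlam : ∀ P ∈ L, ∀ Q ∈ L, Disjoint P Q ∨ P ⊆ Q ∨ Q ⊆ P)
    (heven : ∀ Q ∈ L, Even Q.card) (h4 : ∀ Q ∈ L, 4 ≤ Q.card)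
    (hown : ∀ Q ∈ L, ∃ x ∈ Q, ∀ P ∈ L, P ⊂ Q → x ∉ P) :
    ∃ Q : ℕ → Finset V, (∀ i ≤ s, Q i ∈ L ∧ (Q i).card = 4 + 2 * i) ∧
      ∀ i, i + 1 ≤ s → Q i ⊆ Q (i + 1) := by
  classical
  set own : Finset V → Finset V := fun Q => Q.filter fun x => ∀ P ∈ L, P ⊂ Q → x ∉ P with hodef
  have hosub : ∀ Q, own Q ⊆ Q := fun Q => Finset.filter_subset _ _
  have hodisj : ∀ P ∈ L, ∀ Q ∈ L, P ≠ Q → Disjoint (own P) (own Q) := by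
    intro P hP Q hQ hne
    rw [Finset.disjoint_left]
    intro x hx hy
    have hx' := Finset.mem_filter.1 hx
    have hy' := Finset.mem_filter.1 hy
    rcases hlam P hP Q hQ with h | h | h
    · exact Finset.disjoint_left.1 h hx'.1 hy'.1
    · exact hy'.2 P hP (h.ssubset_of_ne hne) hx'.1
    · exact hx'.2 Q hQ (h.ssubset_of_ne hne.symm) hy'.1
  have hU : ∀ Q ∈ L, (L.filter (· ⊆ Q)).biUnion own = Q := by
    intro Q hQ
    ext x
    simp only [Finset.mem_biUnion, Finset.mem_filter]
    constructor
    · rintro ⟨P, ⟨hP, hPQ⟩, hx⟩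
      exact hPQ (hosub P hx)
    · intro hx
      obtain ⟨P, hP, hmin⟩ := Finset.exists_min_image
        (L.filter fun P => P ⊆ Q ∧ x ∈ P) Finset.card ⟨Q, by simp [hQ, hx]⟩
      rw [Finset.mem_filter] at hP
      refine ⟨P, ⟨hP.1, hP.2.1⟩, ?_⟩
      rw [hodef, Finset.mem_filter]
      refine ⟨hP.2.2, fun R hR hRP hxR => ?_⟩
      have := hmin R (by rw [Finset.mem_filter]; exact ⟨hR, hRP.subset.trans hP.2.1, hxR⟩)
      exact absurd (Finset.card_lt_card hRP) (by omega)
  have hcardU : ∀ Q ∈ L, Q.card = ∑ P ∈ L.filter (· ⊆ Q), (own P).card := by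
    intro Q hQ
    conv_lhs => rw [← hU Q hQ]
    rw [Finset.card_biUnion]
    intro P hP R hR hne
    exact hodisj P (Finset.mem_filter.1 hP).1 R (Finset.mem_filter.1 hR).1 hne
  have hoeven : ∀ k, ∀ Q ∈ L, Q.card = k → Even (own Q).card := by
    intro k
    induction k using Nat.strong_induction_on with
    | _ k ih =>
      intro Q hQ hk
      have h1 := hcardU Q hQ
      have hmem : Q ∈ L.filter (· ⊆ Q) := by simp [hQ]
      rw [← Finset.add_sum_erase _ _ hmem] at h1
      have h2 : Even (∑ P ∈ (L.filter (· ⊆ Q)).erase Q, (own P).card) := by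
        apply Finset.even_sum
        intro P hP
        rw [Finset.mem_erase, Finset.mem_filter] at hP
        exact ih P.card (by rw [← hk]; exact Finset.card_lt_card (hP.2.2.ssubset_of_ne hP.1))
          P hP.2.1 rfl
      have h3 := heven Q hQ
      rw [h1, Nat.even_add] at h3
      exact h3.2 h2
  have ho2 : ∀ Q ∈ L, 2 ≤ (own Q).card := by
    intro Q hQ
    obtain ⟨x, hx, hx'⟩ := hown Q hQ
    have : 0 < (own Q).card := Finset.card_pos.2 ⟨x, by rw [hodef, Finset.mem_filter]; exact ⟨hx, hx'⟩⟩
    obtain ⟨r, hr⟩ := hoeven _ Q hQ rfl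
    omega
  have htot : ∑ Q ∈ L, (own Q).card ≤ 2 * s + 4 := by
    rw [← Finset.card_biUnion (fun P hP Q hQ hne => hodisj P hP Q hQ hne)]
    have hd : Disjoint A (L.biUnion own) := by
      rw [Finset.disjoint_biUnion_right]
      intro Q hQ
      exact Finset.disjoint_of_subset_right (hosub Q) (hAd Q hQ)
    have := Finset.card_le_univ (A ∪ L.biUnion own)
    rw [Finset.card_union_of_disjoint hd] at this
    omega
  have hmincase : ∀ M ∈ L, (∀ P ∈ L, P ⊆ M → M.card ≤ P.card) → own M = M := by
    intro M hM hmin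
    rw [hodef]
    apply Finset.filter_true_of_mem
    intro x hx P hP hPM
    exact absurd (Finset.card_lt_card hPM) (by have := hmin P hP hPM.subset; omega)
  have hLne : L.Nonempty := Finset.card_pos.1 (by omega)
  obtain ⟨M, hM, hMmin⟩ := Finset.exists_min_image L Finset.card hLne
  have hoM : own M = M := hmincase M hM (fun P hP _ => hMmin P hP)
  have hest : ∀ Q ∈ L, Q ≠ M → (own Q).card ≤ 2 := by
    intro Q hQ hQM
    have h1 : Q ∈ L.erase M := Finset.mem_erase.2 ⟨hQM, hQ⟩
    rw [← Finset.add_sum_erase _ _ hM, ← Finset.add_sum_erase _ _ h1, hoM] at htot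
    have h2 : ((L.erase M).erase Q).card • 2 ≤ ∑ P ∈ (L.erase M).erase Q, (own P).card :=
      Finset.card_nsmul_le_sum _ _ _ fun P hP => ho2 P
        (Finset.mem_of_mem_erase (Finset.mem_of_mem_erase hP))
    rw [Finset.card_erase_of_mem h1, Finset.card_erase_of_mem hM, hL, smul_eq_mul] at h2
    have h3 := h4 M hM
    have h5 : 1 ≤ s := by
      have := Finset.card_le_card (show {M, Q} ⊆ L by intro x; simp; rintro (rfl | rfl) <;> assumption)
      rw [Finset.card_pair hQM.symm] at this
      omega
    omega
  have hMcard : M.card = 4 := by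
    have h3 := h4 M hM
    rw [← Finset.add_sum_erase _ _ hM, hoM] at htot
    have h2 : (L.erase M).card • 2 ≤ ∑ P ∈ (L.erase M), (own P).card :=
      Finset.card_nsmul_le_sum _ _ _ fun P hP => ho2 P (Finset.mem_of_mem_erase hP)
    rw [Finset.card_erase_of_mem hM, hL, smul_eq_mul] at h2
    omega
  have hMsub : ∀ Q ∈ L, M ⊆ Q := by
    intro Q hQ
    by_contra hMQ
    obtain ⟨M', hM', hmin'⟩ := Finset.exists_min_image (L.filter (· ⊆ Q)) Finset.card
      ⟨Q, by simp [hQ]⟩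
    rw [Finset.mem_filter] at hM'
    have hoM' := hmincase M' hM'.1 (fun P hP hPM => hmin' P (by
      rw [Finset.mem_filter]; exact ⟨hP, hPM.trans hM'.2⟩))
    have hne : M' ≠ M := by rintro rfl; exact hMQ hM'.2
    have h1 := hest M' hM'.1 hne
    have h2 := h4 M' hM'.1
    rw [hoM'] at h1
    omega
  have hchain : ∀ P ∈ L, ∀ Q ∈ L, P ⊆ Q ∨ Q ⊆ P := by
    intro P hP Q hQ
    rcases hlam P hP Q hQ with h | h
    · exfalso
      obtain ⟨x, hx⟩ := Finset.card_pos.1 (show 0 < M.card by omega)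
      exact Finset.disjoint_left.1 h (hMsub P hP hx) (hMsub Q hQ hx)
    · exact h
  set k : Finset V → ℕ := fun Q => (L.filter (· ⊆ Q)).card with hk
  have hkcard : ∀ Q ∈ L, Q.card = 2 * k Q + 2 ∧ 1 ≤ k Q ∧ k Q ≤ s + 1 := by
    intro Q hQ
    have h1 := hcardU Q hQ
    have hmem : M ∈ L.filter (· ⊆ Q) := by simp [hM, hMsub Q hQ]
    have hpos : 1 ≤ k Q := Finset.card_pos.2 ⟨M, hmem⟩
    rw [← Finset.add_sum_erase _ _ hmem, hoM, hMcard] at h1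
    have h2 : ∑ P ∈ (L.filter (· ⊆ Q)).erase M, (own P).card =
        ((L.filter (· ⊆ Q)).erase M).card * 2 := by
      rw [← smul_eq_mul, ← Finset.sum_const]
      refine Finset.sum_congr rfl fun P hP => ?_
      rw [Finset.mem_erase, Finset.mem_filter] at hP
      exact le_antisymm (hest P hP.2.1 hP.1) (ho2 P hP.2.1)
    rw [h2, Finset.card_erase_of_mem hmem] at h1
    refine ⟨?_, hpos, ?_⟩
    · change Q.card = 4 + (k Q - 1) * 2 at h1
      omega
    · rw [← hL]; exact Finset.card_le_card (Finset.filter_subset _ _)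
  have hkinj : Set.InjOn k (L : Set (Finset V)) := by
    intro P hP Q hQ h
    have h1 := (hkcard P hP).1
    have h2 := (hkcard Q hQ).1
    rw [h, ← h2] at h1
    rcases hchain P hP Q hQ with h' | h'
    · exact Finset.eq_of_subset_of_card_le h' h1.ge
    · exact (Finset.eq_of_subset_of_card_le h' h1.le).symm
  have himg : L.image k = Finset.Icc 1 (s + 1) := by
    apply Finset.eq_of_subset_of_card_le
    · intro x hx
      obtain ⟨Q, hQ, rfl⟩ := Finset.mem_image.1 hx
      rw [Finset.mem_Icc]
      exact (hkcard Q hQ).2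
    · rw [Finset.card_image_of_injOn hkinj, hL]; simp
  have hex : ∀ i, ∃ Q, i ≤ s → (Q ∈ L ∧ Q.card = 4 + 2 * i) := by
    intro i
    by_cases hi : i ≤ s
    · have : i + 1 ∈ L.image k := by rw [himg, Finset.mem_Icc]; omega
      obtain ⟨Q, hQ, hkQ⟩ := Finset.mem_image.1 this
      refine ⟨Q, fun _ => ⟨hQ, ?_⟩⟩
      have := (hkcard Q hQ).1
      omega
    · exact ⟨∅, fun h => absurd h hi⟩
  choose Q hQ using hex
  refine ⟨Q, hQ, fun i hi => ?_⟩
  obtain ⟨h1, h2⟩ := hQ i (by omega)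
  obtain ⟨h3, h5⟩ := hQ (i + 1) hi
  rcases hchain _ h1 _ h3 with h | h
  · exact h
  · have := Finset.card_le_card h
    omega

end Laminar


section Structure

variable {V : Type} [Fintype V] {G : SimpleGraph V}

open Classical in
/-- neighbours of `v` inside `S`. -/
noncomputable def nIn (G : SimpleGraph V) (S : Finset V) (v : V) : Finset V :=
  Finset.univ.filter fun w => G.Adj v w ∧ w ∈ S

open Classical in
/-- neighbours of `v` outside `S`. -/
noncomputable def nOut (G : SimpleGraph V) (S : Finset V) (v : V) : Finset V :=
  Finset.univ.filter fun w => G.Adj v w ∧ w ∉ S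

theorem mem_nIn {S : Finset V} {v w : V} : w ∈ nIn G S v ↔ G.Adj v w ∧ w ∈ S := by simp [nIn]

theorem mem_nOut {S : Finset V} {v w : V} : w ∈ nOut G S v ↔ G.Adj v w ∧ w ∉ S := by simp [nOut]

theorem nIn_add_nOut (hcub : ∀ v : V, Nat.card (G.neighborSet v) = 3) (S : Finset V) (v : V) :
    (nIn G S v).card + (nOut G S v).card = 3 := by
  classical
  rw [← hcub v, Nat.card_eq_fintype_card, ← Set.toFinset_card, ← Finset.card_union_of_disjoint]
  · congr 1
    ext w
    simp only [Finset.mem_union, mem_nIn, mem_nOut, Set.mem_toFinset, SimpleGraph.mem_neighborSet]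
    tauto
  · rw [Finset.disjoint_left]
    intro w h1 h2
    exact (mem_nOut.1 h2).2 (mem_nIn.1 h1).2

theorem card_ecut (S : Finset V) : (ecut G S).card = ∑ v ∈ S, (nOut G S v).card := by
  classical
  rw [← Finset.card_sigma]
  symm
  refine Finset.card_bij (fun p _ => s(p.1, p.2)) ?_ ?_ ?_
  · rintro ⟨u, v⟩ h
    rw [Finset.mem_sigma, mem_nOut] at h
    rw [mem_ecut]
    exact ⟨h.2.1, Or.inl ⟨h.1, h.2.2⟩⟩
  · rintro ⟨u, v⟩ h ⟨u', v'⟩ h' he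
    rw [Finset.mem_sigma, mem_nOut] at h h'
    rcases Sym2.eq_iff.1 he with ⟨h1, h2⟩ | ⟨h1, h2⟩
    · simp only at h1 h2; subst h1; subst h2; rfl
    · simp only at h1 h2 h h'; subst h1; exact absurd h.1 h'.2.2
  · intro e he
    obtain ⟨u, v, rfl, h, hu, hv⟩ := mem_ecut_exists he
    exact ⟨⟨u, v⟩, by rw [Finset.mem_sigma, mem_nOut]; exact ⟨hu, h, hv⟩, rfl⟩

theorem sum_nIn (hcub : ∀ v : V, Nat.card (G.neighborSet v) = 3) (S : Finset V) :
    ∑ v ∈ S, (nIn G S v).card + (ecut G S).card = 3 * S.card := by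
  rw [card_ecut, ← Finset.sum_add_distrib, Finset.sum_congr rfl fun v _ => nIn_add_nOut hcub S v]
  simp [mul_comm]

theorem even_sum_nIn (S : Finset V) : Even (∑ v ∈ S, (nIn G S v).card) := by
  classical
  rw [← Finset.card_sigma, even_iff_two_dvd, ← ZMod.natCast_eq_zero_iff, Finset.cast_card]
  refine Finset.sum_involution (fun p _ => ⟨p.2, p.1⟩) ?_ ?_ ?_ ?_
  · intro p _; decide
  · rintro ⟨u, v⟩ h _ he
    rw [Finset.mem_sigma, mem_nIn] at h
    have : v = u := congrArg Sigma.fst he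
    exact h.2.1.ne this.symm
  · rintro ⟨u, v⟩ h
    rw [Finset.mem_sigma, mem_nIn] at h ⊢
    exact ⟨h.2.2, h.2.1.symm, h.1⟩
  · rintro ⟨u, v⟩ h; rfl

theorem nIn_card_lt {S : Finset V} {v : V} (hv : v ∈ S) : (nIn G S v).card + 1 ≤ S.card := by
  classical
  have : nIn G S v ⊆ S.erase v := by
    intro w hw
    rw [mem_nIn] at hw
    exact Finset.mem_erase.2 ⟨hw.1.ne', hw.2⟩
  have h := Finset.card_le_card this
  rw [Finset.card_erase_of_mem hv] at h
  have : 0 < S.card := Finset.card_pos.2 ⟨v, hv⟩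
  omega

theorem four_le_of_cut (hcub : ∀ v : V, Nat.card (G.neighborSet v) = 3) {S : Finset V}
    (h : (ecut G S).card = 2) : 4 ≤ S.card ∧ Even S.card := by
  have h1 := sum_nIn hcub S
  constructor
  · by_contra hlt
    have h2 : ∑ v ∈ S, (nIn G S v).card ≤ S.card • (S.card - 1) :=
      Finset.sum_le_card_nsmul _ _ _ fun v hv => by have := nIn_card_lt (G := G) hv; omega
    rw [smul_eq_mul] at h2
    have h3 : S.card = 0 ∨ S.card = 1 ∨ S.card = 2 ∨ S.card = 3 := by omega
    rcases h3 with h3 | h3 | h3 | h3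
    · rw [Finset.card_eq_zero] at h3
      subst h3
      rw [card_ecut] at h
      simp at h
    all_goals rw [h3] at h1 h2; omega
  · obtain ⟨r, hr⟩ := even_sum_nIn (G := G) S
    rw [Nat.even_iff]
    omega

theorem edges_count (hcub : ∀ v : V, Nat.card (G.neighborSet v) = 3) :
    2 * (eFin G).card = 3 * Fintype.card V := by
  classical
  have h := G.sum_degrees_eq_twice_card_edges
  have h1 : G.edgeFinset = eFin G := by
    ext e; simp [eFin]
  rw [h1] at h
  rw [← h, Finset.sum_congr rfl (fun v _ => show G.degree v = 3 by
    rw [← hcub v, Nat.card_eq_fintype_card, SimpleGraph.card_neighborSet_eq_degree])]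
  simp [mul_comm]

/-- uncrossing -/
theorem crossing (hconn : G.Connected) (hbr : ∀ e : Sym2 V, ¬ G.IsBridge e)
    {S T : Finset V} (hS : (ecut G S).card = 2) (hT : (ecut G T).card = 2)
    (h1 : ∃ x, x ∈ S ∧ x ∈ T) (h2 : ∃ x, x ∈ S ∧ x ∉ T) (h3 : ∃ x, x ∉ S ∧ x ∈ T)
    (h4 : ∃ x, x ∉ S ∧ x ∉ T) : Disjoint (ecut G S) (ecut G T) ∧
      (∃ e ∈ ecut G S, ∃ f ∈ ecut G T, ceq G e f) ∧
      ∃ R : Finset V, (∀ x, x ∈ R ↔ x ∈ S ∧ x ∉ T) ∧ (ecut G R).card = 2 := by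
  classical
  have c1 := two_le_ecut hconn hbr (S := S ∩ T)
    (by obtain ⟨x, hx⟩ := h1; exact ⟨x, by simpa using hx⟩)
    (by obtain ⟨x, hx⟩ := h2; exact ⟨x, by simp; tauto⟩)
  have c2 := two_le_ecut hconn hbr (S := S \ T)
    (by obtain ⟨x, hx⟩ := h2; exact ⟨x, by simpa using hx⟩)
    (by obtain ⟨x, hx⟩ := h1; exact ⟨x, by simp; tauto⟩)
  have c3 := two_le_ecut hconn hbr (S := T \ S)
    (by obtain ⟨x, hx⟩ := h3; exact ⟨x, by simp; tauto⟩)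
    (by obtain ⟨x, hx⟩ := h1; exact ⟨x, by simp; tauto⟩)
  have c4 := two_le_ecut hconn hbr (S := S ∪ T)
    (by obtain ⟨x, hx⟩ := h1; exact ⟨x, by simp; tauto⟩)
    (by obtain ⟨x, hx⟩ := h4; exact ⟨x, by simpa using hx⟩)
  -- double counting
  have key : (ecut G (S ∩ T)).card + (ecut G (S \ T)).card + (ecut G (T \ S)).card +
      (ecut G (S ∪ T)).card = 2 * (ecut G S ∪ ecut G T).card := by
    have hc : ∀ R : Finset V, (ecut G R).card = ∑ e ∈ eFin G, if e ∈ ecut G R then 1 else 0 := by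
      intro R
      rw [← Finset.card_filter]
      congr 1
      ext e
      simp only [Finset.mem_filter]
      exact ⟨fun h => ⟨ecut_sub h, h⟩, fun h => h.2⟩
    have hc' : (ecut G S ∪ ecut G T).card =
        ∑ e ∈ eFin G, if e ∈ ecut G S ∪ ecut G T then 1 else 0 := by
      rw [← Finset.card_filter]
      congr 1
      ext e
      simp only [Finset.mem_filter]
      refine ⟨fun h => ⟨?_, h⟩, fun h => h.2⟩
      rcases Finset.mem_union.1 h with h | h <;> exact ecut_sub h
    rw [hc, hc, hc, hc, hc', Finset.mul_sum, ← Finset.sum_add_distrib, ← Finset.sum_add_distrib,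
      ← Finset.sum_add_distrib]
    refine Finset.sum_congr rfl fun e he => ?_
    induction e using Sym2.ind with
    | _ u v =>
      rw [mem_eFin] at he
      simp only [mem_ecut, Finset.mem_union, Finset.mem_inter, Finset.mem_sdiff, he, true_and]
      by_cases a1 : u ∈ S <;> by_cases a2 : v ∈ S <;> by_cases a3 : u ∈ T <;>
        by_cases a4 : v ∈ T <;> simp [a1, a2, a3, a4]
  have hun := Finset.card_union_add_card_inter (ecut G S) (ecut G T)
  have hint : (ecut G S ∩ ecut G T).card = 0 := by omega
  have hdis : Disjoint (ecut G S) (ecut G T) := by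
    rw [Finset.disjoint_iff_inter_eq_empty, ← Finset.card_eq_zero]; exact hint
  have e1 : (ecut G (S ∩ T)).card = 2 := by omega
  have hsub : ecut G (S ∩ T) ⊆ ecut G S ∪ ecut G T := by
    intro e
    induction e using Sym2.ind with
    | _ u v =>
      simp only [mem_ecut, Finset.mem_union, Finset.mem_inter]
      tauto
  refine ⟨hdis, ?_, S \ T, by simp, by omega⟩
  -- an edge of each in the cut of the intersection
  have hA : ∃ e ∈ ecut G (S ∩ T), e ∈ ecut G S := by
    by_contra hno
    push Not at hno
    have hs : ecut G (S ∩ T) ⊆ ecut G T := fun e he =>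
      (Finset.mem_union.1 (hsub he)).resolve_left (hno e he)
    have heq := Finset.eq_of_subset_of_card_le hs (by omega)
    have : ecut G (T \ S) = ∅ := by
      have hsd : T \ S = symmDiff (S ∩ T) T := by
        ext x; simp only [Finset.mem_sdiff, Finset.mem_symmDiff, Finset.mem_inter]; tauto
      ext e
      rw [hsd, mem_ecut_symmDiff, heq]
      simp
    rw [this] at c3
    simp at c3
  have hB : ∃ e ∈ ecut G (S ∩ T), e ∈ ecut G T := by
    by_contra hno
    push Not at hno
    have hs : ecut G (S ∩ T) ⊆ ecut G S := fun e he =>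
      (Finset.mem_union.1 (hsub he)).resolve_right (hno e he)
    have heq := Finset.eq_of_subset_of_card_le hs (by omega)
    have : ecut G (S \ T) = ∅ := by
      have hsd : S \ T = symmDiff (S ∩ T) S := by
        ext x; simp only [Finset.mem_sdiff, Finset.mem_symmDiff, Finset.mem_inter]; tauto
      ext e
      rw [hsd, mem_ecut_symmDiff, heq]
      simp
    rw [this] at c2
    simp at c2
  obtain ⟨e, he, heS⟩ := hA
  obtain ⟨f, hf, hfT⟩ := hB
  refine ⟨e, heS, f, hfT, Or.inr ⟨S ∩ T, ?_⟩⟩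
  have hef : e ≠ f := by
    rintro rfl
    exact Finset.disjoint_left.1 hdis heS hfT
  have hsub2 : {e, f} ⊆ ecut G (S ∩ T) := by
    intro x; simp; rintro (rfl | rfl) <;> assumption
  have := Finset.eq_of_subset_of_card_le hsub2 (by rw [e1, Finset.card_pair hef])
  intro x
  rw [← this]
  simp

theorem exists_chain (hconn : G.Connected) (hbr : ∀ e : Sym2 V, ¬ G.IsBridge e)
    (hcub : ∀ v : V, Nat.card (G.neighborSet v) = 3) (s : ℕ)
    (hn : Fintype.card V = 2 * s + 8) (hr : (reps G).card = Fintype.card V + 3) :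
    ∃ Q : ℕ → Finset V, (∀ i ≤ s, (ecut G (Q i)).card = 2 ∧ (Q i).card = 4 + 2 * i) ∧
      ∀ i, i + 1 ≤ s → Q i ⊆ Q (i + 1) := by
  classical
  have hm := edges_count hcub
  -- non-representatives
  set N := eFin G \ reps G with hN
  have hNcard : N.card = s + 1 := by
    rw [hN, Finset.card_sdiff_of_subset reps_sub]; omega
  have hNmem : ∀ e, e ∈ N → e ∈ eFin G ∧ crep G e ≠ e := by
    intro e he
    rw [hN, Finset.mem_sdiff] at he
    exact ⟨he.1, fun h => he.2 ((mem_reps he.1).2 h)⟩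
  have hNcut : ∀ e, e ∈ N → ∃ S : Finset V, ecut G S = {e, crep G e} := by
    intro e he
    obtain ⟨h1, h2⟩ := hNmem e he
    rcases crep_ceq (G := G) e with h | ⟨S, hS⟩
    · exact absurd h h2
    · refine ⟨S, ?_⟩
      ext x; rw [hS]; simp [or_comm]
  obtain ⟨e0, he0⟩ := Finset.card_pos.1 (show 0 < N.card by omega)
  -- smallest side
  obtain ⟨A, hA, hAmin⟩ := Finset.exists_min_image
    (Finset.univ.filter fun S : Finset V => (ecut G S).card = 2) Finset.card (by
      obtain ⟨S, hS⟩ := hNcut e0 he0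
      refine ⟨S, ?_⟩
      simp only [Finset.mem_filter, Finset.mem_univ, true_and]
      rw [hS, Finset.card_pair (hNmem e0 he0).2.symm])
  simp only [Finset.mem_filter, Finset.mem_univ, true_and] at hA hAmin
  have hA4 := (four_le_of_cut hcub hA).1
  obtain ⟨v0, hv0⟩ := Finset.card_pos.1 (show 0 < A.card by omega)
  have hQex : ∀ e, ∃ S : Finset V, e ∈ N → (ecut G S = {e, crep G e} ∧ v0 ∉ S) := by
    intro e
    by_cases he : e ∈ N
    · obtain ⟨S, hS⟩ := hNcut e he
      by_cases hv : v0 ∈ S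
      · exact ⟨Sᶜ, fun _ => ⟨by rw [ecut_compl]; exact hS, by simpa using hv⟩⟩
      · exact ⟨S, fun _ => ⟨hS, hv⟩⟩
    · exact ⟨∅, fun h => absurd h he⟩
  choose Q hQ using hQex
  have hQ2 : ∀ e ∈ N, (ecut G (Q e)).card = 2 := by
    intro e he
    rw [(hQ e he).1, Finset.card_pair (hNmem e he).2.symm]
  have hQinj : ∀ e ∈ N, ∀ f ∈ N, e ∈ ecut G (Q f) → e = f := by
    intro e he f hf h
    rw [(hQ f hf).1] at h
    simp only [Finset.mem_insert, Finset.mem_singleton] at h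
    rcases h with h | h
    · exact h
    · exfalso
      apply (hNmem e he).2
      rw [h, crep_crep]
  have hQself : ∀ e ∈ N, e ∈ ecut G (Q e) := by
    intro e he; rw [(hQ e he).1]; simp
  have hinj : Set.InjOn Q (N : Set (Sym2 V)) := by
    intro e he f hf h
    apply hQinj e he f hf
    rw [← h]
    exact hQself e he
  have hlc : ∃ R : ℕ → Finset V, (∀ i ≤ s, R i ∈ N.image Q ∧ (R i).card = 4 + 2 * i) ∧
      ∀ i, i + 1 ≤ s → R i ⊆ R (i + 1) := by
    refine laminar_chain (N.image Q) s
      (by rw [Finset.card_image_of_injOn hinj, hNcard]) hn A hA4 ?_ ?_ ?_ ?_ ?_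
    · -- disjoint from A
      intro S hS
      obtain ⟨e, he, rfl⟩ := Finset.mem_image.1 hS
      by_contra hnd
      rw [Finset.not_disjoint_iff] at hnd
      obtain ⟨x, hxA, hxQ⟩ := hnd
      have hv := (hQ e he).2
      by_cases hsub : Q e ⊆ A
      · have := hAmin _ (hQ2 e he)
        have := Finset.eq_of_subset_of_card_le hsub this
        rw [this] at hv
        exact hv hv0
      · obtain ⟨y, hy1, hy2⟩ := Finset.not_subset.1 hsub
        by_cases hcov : ∃ z, z ∉ A ∧ z ∉ Q e
        · obtain ⟨-, -, T, hT, hT2⟩ := crossing hconn hbr hA (hQ2 e he) ⟨x, hxA, hxQ⟩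
            ⟨v0, hv0, hv⟩ ⟨y, hy2, hy1⟩ hcov
          have h1 := hAmin T hT2
          have hTA : T ⊆ A := fun z hz => ((hT z).1 hz).1
          have := Finset.eq_of_subset_of_card_le hTA h1
          have h3 : x ∈ T := by rw [this]; exact hxA
          exact ((hT x).1 h3).2 hxQ
        · push Not at hcov
          have hsubc : (Q e)ᶜ ⊆ A := by
            intro z hz
            by_contra hzA
            exact (Finset.mem_compl.1 hz) (hcov z hzA)
          have h1 := hAmin (Q e)ᶜ (by rw [ecut_compl]; exact hQ2 e he)
          have := Finset.eq_of_subset_of_card_le hsubc h1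
          have h3 : x ∈ (Q e)ᶜ := by rw [this]; exact hxA
          exact (Finset.mem_compl.1 h3) hxQ
    · -- laminar
      intro S hS T hT
      obtain ⟨e, he, rfl⟩ := Finset.mem_image.1 hS
      obtain ⟨f, hf, rfl⟩ := Finset.mem_image.1 hT
      by_contra hno
      push Not at hno
      obtain ⟨h1, h2, h3⟩ := hno
      rw [Finset.not_disjoint_iff] at h1
      obtain ⟨y, hy⟩ := Finset.not_subset.1 h2
      obtain ⟨z, hz⟩ := Finset.not_subset.1 h3
      obtain ⟨hd, ⟨a, ha, b, hb, hab⟩, -⟩ := crossing hconn hbr (hQ2 e he) (hQ2 f hf) h1 ⟨y, hy⟩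
        ⟨z, hz.2, hz.1⟩ ⟨v0, (hQ e he).2, (hQ f hf).2⟩
      rw [(hQ e he).1] at ha hd
      rw [(hQ f hf).1] at hb hd
      have ha' : crep G a = crep G e := by
        simp only [Finset.mem_insert, Finset.mem_singleton] at ha
        rcases ha with rfl | rfl
        · rfl
        · exact crep_crep e
      have hb' : crep G b = crep G f := by
        simp only [Finset.mem_insert, Finset.mem_singleton] at hb
        rcases hb with rfl | rfl
        · rfl
        · exact crep_crep f
      have : crep G e = crep G f := by rw [← ha', ← hb', crep_eq_iff]; exact hab
      rw [this, Finset.disjoint_left] at hd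
      exact hd (a := crep G f) (by simp) (by simp)
    · intro S hS
      obtain ⟨e, he, rfl⟩ := Finset.mem_image.1 hS
      exact (four_le_of_cut hcub (hQ2 e he)).2
    · intro S hS
      obtain ⟨e, he, rfl⟩ := Finset.mem_image.1 hS
      exact (four_le_of_cut hcub (hQ2 e he)).1
    · intro S hS
      obtain ⟨e, he, rfl⟩ := Finset.mem_image.1 hS
      obtain ⟨x, y, hxy, hadj, hx, hy⟩ := mem_ecut_exists (hQself e he)
      refine ⟨x, hx, fun P hP hPQ hxP => ?_⟩
      obtain ⟨f, hf, rfl⟩ := Finset.mem_image.1 hP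
      have : e ∈ ecut G (Q f) := by
        rw [hxy, mem_ecut]
        exact ⟨hadj, Or.inl ⟨hxP, fun h => hy (hPQ.subset h)⟩⟩
      have := hQinj e he f hf this
      subst this
      exact hPQ.ne rfl
  obtain ⟨R, hR1, hR2⟩ := hlc
  refine ⟨R, fun i hi => ?_, hR2⟩
  obtain ⟨h1, h2⟩ := hR1 i hi
  obtain ⟨e, he, h3⟩ := Finset.mem_image.1 h1
  rw [← h3]
  exact ⟨hQ2 e he, by rw [h3]; exact h2⟩


end Structure


section GS

variable {s : ℕ}

/-- `col s i j` is the `j`-th vertex of the `i`-th column of `G*` (`0 ≤ i ≤ s+1`). -/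
def col (s i : ℕ) (j : Fin 2) : GStarV s :=
  if i = 0 then Sum.inl (Fin.castLE (by omega) j)
  else if h : i - 1 < s then Sum.inr (Sum.inr (⟨i - 1, h⟩, j))
  else Sum.inr (Sum.inl (Fin.castLE (by omega) j))

/-- the two inner vertices of the `a` end -/
def aEnd (s : ℕ) (j : Fin 2) : GStarV s := Sum.inl (Fin.natAdd 2 j)

/-- the two inner vertices of the `b` end -/
def bEnd (s : ℕ) (j : Fin 2) : GStarV s := Sum.inr (Sum.inl (Fin.natAdd 2 j))

theorem col_zero (j : Fin 2) : col s 0 j = Sum.inl (Fin.castLE (by omega) j) := by simp [col]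

theorem col_mid (i : ℕ) (h : i < s) (j : Fin 2) : col s (i + 1) j = Sum.inr (Sum.inr (⟨i, h⟩, j)) := by
  simp [col, h]

theorem col_last (j : Fin 2) : col s (s + 1) j = Sum.inr (Sum.inl (Fin.castLE (by omega) j)) := by
  simp [col]

/-- case analysis on vertices -/
theorem gs_cases (v : GStarV s) : (∃ j, v = aEnd s j) ∨ (∃ j, v = bEnd s j) ∨
    (∃ j, v = col s 0 j) ∨ (∃ j, v = col s (s + 1) j) ∨ ∃ i j, i < s ∧ v = col s (i + 1) j := by
  rcases v with v | v | ⟨i, j⟩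
  · fin_cases v
    · right; right; left; exact ⟨0, by rw [col_zero]; rfl⟩
    · right; right; left; exact ⟨1, by rw [col_zero]; rfl⟩
    · left; exact ⟨0, rfl⟩
    · left; exact ⟨1, rfl⟩
  · fin_cases v
    · right; right; right; left; exact ⟨0, by rw [col_last]; rfl⟩
    · right; right; right; left; exact ⟨1, by rw [col_last]; rfl⟩
    · right; left; exact ⟨0, rfl⟩
    · right; left; exact ⟨1, rfl⟩
  · right; right; right; right
    exact ⟨i, j, i.2, by rw [col_mid _ i.2]⟩

theorem gs_adj (v w : GStarV s) : (gStar s).Adj v w ↔ v ≠ w ∧ (gStarRel s v w ∨ gStarRel s w v) := by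
  simp [gStar]

theorem adj_aEnd (j : Fin 2) (w : GStarV s) : (gStar s).Adj (aEnd s j) w ↔
    w = col s 0 0 ∨ w = col s 0 1 ∨ w = aEnd s (1 - j) := by
  rw [gs_adj, col_zero, col_zero]
  rcases w with w | w | ⟨i, k⟩
  · fin_cases j <;> fin_cases w <;> simp [aEnd, gStarRel, Fin.natAdd] <;> decide
  · fin_cases j <;> fin_cases w <;> simp [aEnd, gStarRel, Fin.natAdd]
  · fin_cases j <;> fin_cases k <;> simp [aEnd, gStarRel, Fin.natAdd]

theorem adj_bEnd (j : Fin 2) (w : GStarV s) : (gStar s).Adj (bEnd s j) w ↔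
    w = col s (s + 1) 0 ∨ w = col s (s + 1) 1 ∨ w = bEnd s (1 - j) := by
  rw [gs_adj, col_last, col_last]
  rcases w with w | w | ⟨i, k⟩
  · fin_cases j <;> fin_cases w <;> simp [bEnd, gStarRel, Fin.natAdd]
  · fin_cases j <;> fin_cases w <;> simp [bEnd, gStarRel, Fin.natAdd] <;> decide
  · fin_cases j <;> fin_cases k <;> simp [bEnd, gStarRel, Fin.natAdd]

theorem adj_col_zero (j : Fin 2) (w : GStarV s) : (gStar s).Adj (col s 0 j) w ↔
    w = aEnd s 0 ∨ w = aEnd s 1 ∨ w = col s 1 j := by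
  rw [gs_adj, col_zero]
  rcases Nat.eq_zero_or_pos s with rfl | hs
  · rw [col_last]
    rcases w with w | w | ⟨i, k⟩
    · fin_cases j <;> fin_cases w <;> simp [aEnd, gStarRel, Fin.natAdd] <;> decide
    · fin_cases j <;> fin_cases w <;> simp [aEnd, gStarRel, Fin.natAdd]
    · exact i.elim0
  · rw [col_mid 0 hs]
    rcases w with w | w | ⟨i, k⟩
    · fin_cases j <;> fin_cases w <;> simp [aEnd, gStarRel, Fin.natAdd] <;> decide
    · fin_cases j <;> fin_cases w <;> simp [aEnd, gStarRel, Fin.natAdd] <;> omega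
    · fin_cases j <;> fin_cases k <;> simp [aEnd, gStarRel, Fin.natAdd, Fin.ext_iff]

theorem adj_col_last (j : Fin 2) (w : GStarV s) : (gStar s).Adj (col s (s + 1) j) w ↔
    w = bEnd s 0 ∨ w = bEnd s 1 ∨ w = col s s j := by
  rw [gs_adj, col_last]
  rcases Nat.eq_zero_or_pos s with rfl | hs
  · rw [col_zero]
    rcases w with w | w | ⟨i, k⟩
    · fin_cases j <;> fin_cases w <;> simp [bEnd, gStarRel, Fin.natAdd]
    · fin_cases j <;> fin_cases w <;> simp [bEnd, gStarRel, Fin.natAdd] <;> decide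
    · exact i.elim0
  · obtain ⟨t, rfl⟩ : ∃ t, s = t + 1 := ⟨s - 1, by omega⟩
    rw [col_mid t (by omega)]
    rcases w with w | w | ⟨i, k⟩
    · fin_cases j <;> fin_cases w <;> simp [bEnd, gStarRel, Fin.natAdd]
    · fin_cases j <;> fin_cases w <;> simp [bEnd, gStarRel, Fin.natAdd] <;> decide
    · fin_cases j <;> fin_cases k <;> simp [bEnd, gStarRel, Fin.natAdd, Fin.ext_iff]

theorem adj_col_mid (i : ℕ) (hi : i < s) (j : Fin 2) (w : GStarV s) :
    (gStar s).Adj (col s (i + 1) j) w ↔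
    w = col s i j ∨ w = col s (i + 2) j ∨ w = col s (i + 1) (1 - j) := by
  rw [gs_adj, col_mid i hi, col_mid i hi]
  rcases w with w | w | ⟨k, l⟩
  · simp only [col]
    fin_cases j <;> fin_cases w <;> simp [gStarRel] <;> split_ifs <;> simp <;> omega
  · simp only [col]
    fin_cases j <;> fin_cases w <;> simp [gStarRel] <;> split_ifs <;> simp <;> omega
  · have hk := k.2
    simp only [col]
    fin_cases j <;> fin_cases l <;> simp [gStarRel, Fin.ext_iff] <;> split_ifs <;> simp [Fin.ext_iff] <;> omega

end GS


section ChainIso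

variable {V : Type} [Fintype V] {G : SimpleGraph V}

/-- `Q` is left exactly by the two edges `c j — r j`. -/
def St (G : SimpleGraph V) (Q : Finset V) (c r : Fin 2 → V) : Prop :=
  (∀ j, c j ∈ Q) ∧ c 0 ≠ c 1 ∧ (∀ j, r j ∉ Q ∧ G.Adj (c j) (r j)) ∧
    ∀ v ∈ Q, ∀ w, w ∉ Q → G.Adj v w → ∃ j, v = c j ∧ w = r j

theorem st_of_nOut {Q : Finset V} {c0 c1 : V} (h0 : c0 ∈ Q) (h1 : c1 ∈ Q) (hne : c0 ≠ c1)
    (hc0 : (nOut G Q c0).card = 1) (hc1 : (nOut G Q c1).card = 1)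
    (hz : ∀ v ∈ Q, v ≠ c0 → v ≠ c1 → (nOut G Q v).card = 0) :
    ∃ r, St G Q ![c0, c1] r := by
  obtain ⟨r0, hr0⟩ := Finset.card_eq_one.1 hc0
  obtain ⟨r1, hr1⟩ := Finset.card_eq_one.1 hc1
  have e0 : ∀ w, (G.Adj c0 w ∧ w ∉ Q) ↔ w = r0 := by
    intro w; rw [← mem_nOut, hr0, Finset.mem_singleton]
  have e1 : ∀ w, (G.Adj c1 w ∧ w ∉ Q) ↔ w = r1 := by
    intro w; rw [← mem_nOut, hr1, Finset.mem_singleton]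
  refine ⟨![r0, r1], ?_, ?_, ?_, ?_⟩
  · intro j; fin_cases j <;> simpa
  · simpa using hne
  · intro j; fin_cases j
    · exact ((e0 r0).2 rfl).symm
    · exact ((e1 r1).2 rfl).symm
  · intro v hv w hw hvw
    by_cases h : v = c0
    · subst h
      exact ⟨0, rfl, (e0 w).1 ⟨hvw, hw⟩⟩
    · by_cases h' : v = c1
      · subst h'
        exact ⟨1, rfl, (e1 w).1 ⟨hvw, hw⟩⟩
      · have := hz v hv h h'
        rw [Finset.card_eq_zero] at this
        have h3 : w ∈ nOut G Q v := mem_nOut.2 ⟨hvw, hw⟩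
        rw [this] at h3
        simp at h3

theorem nIn_full [DecidableEq V] {Q : Finset V} {v : V} (hv : v ∈ Q) (hQ : Q.card ≤ 4)
    (hcub : ∀ v : V, Nat.card (G.neighborSet v) = 3)
    (h0 : (nOut G Q v).card = 0) : ∀ w ∈ Q, w ≠ v → G.Adj v w := by
  have h1 := nIn_add_nOut hcub Q v
  have hsub : nIn G Q v ⊆ Q.erase v := by
    intro w hw
    rw [mem_nIn] at hw
    exact Finset.mem_erase.2 ⟨hw.1.ne', hw.2⟩
  have := Finset.eq_of_subset_of_card_le hsub (by rw [Finset.card_erase_of_mem hv]; omega)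
  intro w hw hne
  have h : w ∈ Q.erase v := Finset.mem_erase.2 ⟨hne, hw⟩
  rw [← this, mem_nIn] at h
  exact h.1

theorem base_lemma (hcub : ∀ v : V, Nat.card (G.neighborSet v) = 3) {X : Finset V}
    (hX : X.card = 4) (h2 : (ecut G X).card = 2) :
    ∃ c r a : Fin 2 → V, St G X c r ∧ (∀ v ∈ X, (∃ j, v = c j) ∨ ∃ j, v = a j) ∧
      G.Adj (a 0) (a 1) ∧ ∀ j k, G.Adj (a j) (c k) := by
  classical
  rw [card_ecut] at h2
  obtain ⟨c0, hc0, hn0⟩ : ∃ v ∈ X, (nOut G X v).card ≠ 0 := by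
    by_contra h
    push Not at h
    rw [Finset.sum_eq_zero h] at h2
    omega
  rw [← Finset.add_sum_erase X _ hc0] at h2
  obtain ⟨c1, hc1, hn1⟩ : ∃ v ∈ X.erase c0, (nOut G X v).card ≠ 0 := by
    by_contra h
    push Not at h
    rw [Finset.sum_eq_zero h] at h2
    have hsub : X.erase c0 ⊆ nIn G X c0 := by
      intro w hw
      rw [mem_nIn]
      rw [Finset.mem_erase] at hw
      exact ⟨(nIn_full hw.2 hX.le hcub (h w (Finset.mem_erase.2 hw)) c0 hc0 hw.1.symm).symm, hw.2⟩
    have := Finset.card_le_card hsub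
    rw [Finset.card_erase_of_mem hc0] at this
    have := nIn_add_nOut hcub X c0
    omega
  rw [← Finset.add_sum_erase _ _ hc1] at h2
  have hz : ∑ v ∈ (X.erase c0).erase c1, (nOut G X v).card = 0 := by omega
  rw [Finset.sum_eq_zero_iff] at hz
  have hcard : ((X.erase c0).erase c1).card = 2 := by
    rw [Finset.card_erase_of_mem hc1, Finset.card_erase_of_mem hc0]; omega
  obtain ⟨a0, a1, hne, ha⟩ := Finset.card_eq_two.1 hcard
  have hmem : ∀ v, (v ≠ c1 ∧ v ≠ c0 ∧ v ∈ X) ↔ (v = a0 ∨ v = a1) := by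
    intro v
    rw [← Finset.mem_erase, ← Finset.mem_erase, ha]; simp
  rw [Finset.mem_erase] at hc1
  obtain ⟨r, hr⟩ := st_of_nOut hc0 hc1.2 hc1.1.symm (by omega) (by omega) (fun v hv h h' =>
    hz v (by rw [Finset.mem_erase, Finset.mem_erase]; exact ⟨h', h, hv⟩))
  obtain ⟨p1, p2, p3⟩ := (hmem a0).2 (Or.inl rfl)
  obtain ⟨q1, q2, q3⟩ := (hmem a1).2 (Or.inr rfl)
  have f0 := nIn_full p3 hX.le hcub (hz a0 (by simp [ha]))
  have f1 := nIn_full q3 hX.le hcub (hz a1 (by simp [ha]))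
  refine ⟨![c0, c1], r, ![a0, a1], hr, ?_, ?_, ?_⟩
  · intro v hv
    by_cases h0 : v = c0
    · exact Or.inl ⟨0, h0⟩
    · by_cases h1 : v = c1
      · exact Or.inl ⟨1, h1⟩
      · right
        rcases (hmem v).1 ⟨h1, h0, hv⟩ with h | h
        · exact ⟨0, h⟩
        · exact ⟨1, h⟩
  · exact f0 a1 q3 hne.symm
  · intro j k
    fin_cases j <;> fin_cases k
    · exact f0 _ hc0 p2.symm
    · exact f0 _ hc1.2 p1.symm
    · exact f1 _ hc0 q2.symm
    · exact f1 _ hc1.2 q1.symm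

/-- three-way split of the neighbours. -/
theorem three_split [DecidableEq V] (hcub : ∀ v : V, Nat.card (G.neighborSet v) = 3) {Q Q' : Finset V}
    (hsub : Q ⊆ Q') (v : V) :
    (nIn G Q v).card + (nIn G (Q' \ Q) v).card + (nOut G Q' v).card = 3 := by
  rw [← nIn_add_nOut hcub Q' v]
  congr 1
  rw [← Finset.card_union_of_disjoint]
  · congr 1
    ext w
    have := @hsub w
    simp only [Finset.mem_union, mem_nIn, Finset.mem_sdiff]
    tauto
  · rw [Finset.disjoint_left]
    intro w h1 h2
    exact (Finset.mem_sdiff.1 (mem_nIn.1 h2).2).2 (mem_nIn.1 h1).2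

theorem step_lemma (hconn : G.Connected) (hbr : ∀ e : Sym2 V, ¬ G.IsBridge e)
    (hcub : ∀ v : V, Nat.card (G.neighborSet v) = 3) {Q Q' : Finset V} (hsub : Q ⊆ Q')
    (hcard : Q'.card = Q.card + 2) (hcut : (ecut G Q').card = 2) {c r : Fin 2 → V}
    (hst : St G Q c r) :
    (∀ v ∈ Q', v ∈ Q ∨ ∃ j, v = r j) ∧ G.Adj (r 0) (r 1) ∧ ∃ r', St G Q' r r' := by
  classical
  obtain ⟨hc, hcne, hr, hall⟩ := hst
  set D := Q' \ Q with hD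
  have hDcard : D.card = 2 := by rw [hD, Finset.card_sdiff_of_subset hsub]; omega
  have hsum : ∑ v ∈ Q, (nOut G Q' v).card + ∑ v ∈ D, (nOut G Q' v).card = 2 := by
    rw [← hcut, card_ecut, ← Finset.sum_sdiff hsub, add_comm]
  have hnQ : ∀ v ∈ D, ∀ w ∈ nIn G Q v, ∃ j, w = c j ∧ v = r j := by
    intro v hv w hw
    rw [mem_nIn] at hw
    exact hall w hw.2 v (Finset.mem_sdiff.1 hv).2 hw.1.symm
  -- both `r j` lie in `D`
  have key : ∀ i j : Fin 2, i ≠ j → r i ∈ D := by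
    intro i j hij
    by_contra hri
    have hriQ : r i ∉ Q' := fun h => hri (Finset.mem_sdiff.2 ⟨h, (hr i).1⟩)
    have h1 : 1 ≤ ∑ v ∈ Q, (nOut G Q' v).card := by
      refine le_trans ?_ (Finset.single_le_sum (f := fun v => (nOut G Q' v).card)
        (fun _ _ => Nat.zero_le _) (hc i))
      exact Finset.card_pos.2 ⟨r i, mem_nOut.2 ⟨(hr i).2, hriQ⟩⟩
    obtain ⟨x, y, hxy, hDxy⟩ := Finset.card_eq_two.1 hDcard
    rw [hDxy, Finset.sum_pair hxy] at hsum
    have hx : x ∈ D := by simp [hDxy]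
    have hy : y ∈ D := by simp [hDxy]
    have hle : ∀ v ∈ D, (nIn G Q v).card ≤ if v = r j then 1 else 0 := by
      intro v hv
      have hs : nIn G Q v ⊆ if v = r j then {c j} else ∅ := by
        intro w hw
        obtain ⟨k, hk1, hk2⟩ := hnQ v hv w hw
        have hkj : k = j := by
          by_contra hkj
          have : k = i := by omega
          subst this
          rw [hk2] at hv; exact hri hv
        subst hkj
        simp [hk1, hk2]
      refine (Finset.card_le_card hs).trans ?_
      split_ifs <;> simp
    have hQxy : (nIn G Q x).card + (nIn G Q y).card ≤ 1 := by
      have a := hle x hx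
      have b := hle y hy
      split_ifs at a b with h3 h4
      · exact absurd (h3.trans h4.symm) hxy
      all_goals omega
    have t1 := three_split hcub hsub x
    have t2 := three_split hcub hsub y
    rw [← hD] at t1 t2
    have := nIn_card_lt (G := G) hx
    have := nIn_card_lt (G := G) hy
    omega
  have hr0 : r 0 ∈ D := key 0 1 (by decide)
  have hr1 : r 1 ∈ D := key 1 0 (by decide)
  have hrne : r 0 ≠ r 1 := by
    intro heq
    have h2 : 2 ≤ (ecut G (insert (r 0) Q)).card := by
      apply two_le_ecut hconn hbr ⟨r 0, by simp⟩
      by_contra hno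
      push Not at hno
      have : Fintype.card V ≤ Q.card + 1 := by
        rw [← Finset.card_univ]
        refine (Finset.card_le_card (fun v _ => hno v)).trans (Finset.card_insert_le _ _)
      have := Finset.card_le_univ Q'
      omega
    rw [card_ecut, Finset.sum_insert (hr 0).1, Finset.sum_eq_zero (s := Q)] at h2
    · have h3 := nIn_add_nOut hcub (insert (r 0) Q) (r 0)
      have h4 : ({c 0, c 1} : Finset V) ⊆ nIn G (insert (r 0) Q) (r 0) := by
        intro w hw
        simp only [Finset.mem_insert, Finset.mem_singleton] at hw
        rw [mem_nIn]
        rcases hw with rfl | rfl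
        · exact ⟨(hr 0).2.symm, by simp [hc 0]⟩
        · rw [heq]; exact ⟨(hr 1).2.symm, by simp [hc 1]⟩
      have h5 := Finset.card_le_card h4
      rw [Finset.card_pair hcne] at h5
      omega
    · intro v hv
      rw [Finset.card_eq_zero, Finset.eq_empty_iff_forall_notMem]
      intro w hw
      rw [mem_nOut, Finset.mem_insert, not_or] at hw
      obtain ⟨j, h6, h7⟩ := hall v hv w hw.2.2 hw.1
      fin_cases j
      · exact hw.2.1 h7
      · exact hw.2.1 (h7.trans heq.symm)
  have hDeq : D = {r 0, r 1} := by
    symm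
    apply Finset.eq_of_subset_of_card_le
    · intro w hw
      simp only [Finset.mem_insert, Finset.mem_singleton] at hw
      rcases hw with rfl | rfl
      · exact hr0
      · exact hr1
    · rw [Finset.card_pair hrne]; omega
  have hnle : ∀ j, (nIn G Q (r j)).card ≤ 1 := by
    intro j
    have hrj : r j ∈ D := by fin_cases j; exacts [hr0, hr1]
    have : nIn G Q (r j) ⊆ {c j} := by
      intro w hw
      obtain ⟨k, hk1, hk2⟩ := hnQ _ hrj w hw
      have : k = j := by
        by_contra hkj
        fin_cases k <;> fin_cases j
        · exact hkj rfl
        · exact hrne hk2.symm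
        · exact hrne hk2
        · exact hkj rfl
      subst this
      simp [hk1]
    simpa using Finset.card_le_card this
  rw [hDeq, Finset.sum_pair hrne] at hsum
  have t0 := three_split hcub hsub (r 0)
  have t1 := three_split hcub hsub (r 1)
  rw [← hD] at t0 t1
  have u0 := nIn_card_lt (G := G) hr0
  have u1 := nIn_card_lt (G := G) hr1
  have n0 := hnle 0
  have n1 := hnle 1
  have hz : ∑ v ∈ Q, (nOut G Q' v).card = 0 := by omega
  rw [Finset.sum_eq_zero_iff] at hz
  have hmem : ∀ v ∈ Q', v ∈ Q ∨ v = r 0 ∨ v = r 1 := by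
    intro v hv
    by_cases h : v ∈ Q
    · exact Or.inl h
    · have : v ∈ D := Finset.mem_sdiff.2 ⟨hv, h⟩
      rw [hDeq] at this
      simpa using Or.inr this
  refine ⟨?_, ?_, ?_⟩
  · intro v hv
    rcases hmem v hv with h | h | h
    · exact Or.inl h
    · exact Or.inr ⟨0, h⟩
    · exact Or.inr ⟨1, h⟩
  · obtain ⟨w, hw⟩ := Finset.card_pos.1 (show 0 < (nIn G D (r 0)).card by omega)
    rw [mem_nIn, hDeq, Finset.mem_insert, Finset.mem_singleton] at hw
    rcases hw.2 with h | h
    · exact absurd h hw.1.ne'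
    · rw [← h]; exact hw.1
  · have := st_of_nOut (G := G) (Q := Q') (Finset.mem_sdiff.1 hr0).1 (Finset.mem_sdiff.1 hr1).1 hrne
      (by omega) (by omega) (fun v hv h h' => by
        rcases hmem v hv with h3 | h3 | h3
        · exact hz v h3
        · exact absurd h3 h
        · exact absurd h3 h')
    have e : ![r 0, r 1] = r := by
      funext j; fin_cases j <;> rfl
    rwa [e] at this

theorem columns (hconn : G.Connected) (hbr : ∀ e : Sym2 V, ¬ G.IsBridge e)
    (hcub : ∀ v : V, Nat.card (G.neighborSet v) = 3) (s : ℕ) (Q : ℕ → Finset V)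
    (hQ : ∀ i ≤ s, (ecut G (Q i)).card = 2 ∧ (Q i).card = 4 + 2 * i)
    (hQs : ∀ i, i + 1 ≤ s → Q i ⊆ Q (i + 1)) {c0 r0 : Fin 2 → V} (hst : St G (Q 0) c0 r0) :
    ∀ k ≤ s, ∃ c : ℕ → Fin 2 → V, c 0 = c0 ∧ (∀ i ≤ k, St G (Q i) (c i) (c (i + 1))) ∧
      ∀ i, i + 1 ≤ k → (∀ v ∈ Q (i + 1), v ∈ Q i ∨ ∃ j, v = c (i + 1) j) ∧
        G.Adj (c (i + 1) 0) (c (i + 1) 1) := by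
  intro k
  induction k with
  | zero =>
    intro _
    refine ⟨fun i => if i = 0 then c0 else r0, rfl, ?_, ?_⟩
    · intro i hi
      obtain rfl : i = 0 := by omega
      exact hst
    · intro i hi; omega
  | succ k ih =>
    intro hk
    obtain ⟨c, h0, h1, h2⟩ := ih (by omega)
    obtain ⟨g1, g2, r', g3⟩ := step_lemma hconn hbr hcub (hQs k hk)
      (by rw [(hQ k (by omega)).2, (hQ (k + 1) hk).2]; omega) (hQ (k + 1) hk).1 (h1 k le_rfl)
    refine ⟨fun i => if i = k + 2 then r' else c i, ?_, ?_, ?_⟩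
    · simpa using h0
    · intro i hi
      by_cases hik : i = k + 1
      · subst hik
        simpa using g3
      · have := h1 i (by omega)
        simp only [show i ≠ k + 2 by omega, show i + 1 ≠ k + 2 by omega, if_false]
        exact this
    · intro i hi
      simp only [show i + 1 ≠ k + 2 by omega, if_false]
      by_cases hik : i = k
      · subst hik
        exact ⟨g1, g2⟩
      · exact h2 i (by omega)

end ChainIso


section BuildIso

variable {V : Type} [Fintype V] {G : SimpleGraph V} {s : ℕ}

theorem col_ne_aEnd (i : ℕ) (j k : Fin 2) : col s i j ≠ aEnd s k := by
  unfold col aEnd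
  fin_cases j <;> fin_cases k <;> split_ifs <;> simp

theorem col_ne_bEnd (i : ℕ) (j k : Fin 2) : col s i j ≠ bEnd s k := by
  unfold col bEnd
  fin_cases j <;> fin_cases k <;> split_ifs <;> simp

theorem col_inj {i i' : ℕ} {j j' : Fin 2} (hi : i ≤ s + 1) (hi' : i' ≤ s + 1)
    (h : col s i j = col s i' j') : i = i' ∧ j = j' := by
  unfold col at h
  fin_cases j <;> fin_cases j' <;> split_ifs at h <;> simp at h ⊢ <;> omega

theorem aEnd_ne : aEnd s 0 ≠ aEnd s 1 := by
  simp [aEnd]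

theorem bEnd_ne : bEnd s 0 ≠ bEnd s 1 := by
  simp [bEnd]

theorem gs_nbrs (v : GStarV s) : ∃ x y z, x ≠ y ∧ x ≠ z ∧ y ≠ z ∧
    ∀ w, (gStar s).Adj v w ↔ w = x ∨ w = y ∨ w = z := by
  rcases gs_cases v with ⟨j, rfl⟩ | ⟨j, rfl⟩ | ⟨j, rfl⟩ | ⟨j, rfl⟩ | ⟨i, j, hi, rfl⟩
  · refine ⟨_, _, _, ?_, ?_, ?_, adj_aEnd j⟩
    · intro h; exact absurd (col_inj (by omega) (by omega) h).2 (by decide)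
    · exact col_ne_aEnd _ _ _
    · exact col_ne_aEnd _ _ _
  · refine ⟨_, _, _, ?_, ?_, ?_, adj_bEnd j⟩
    · intro h; exact absurd (col_inj (by omega) (by omega) h).2 (by decide)
    · exact col_ne_bEnd _ _ _
    · exact col_ne_bEnd _ _ _
  · exact ⟨_, _, _, aEnd_ne, (col_ne_aEnd _ _ _).symm, (col_ne_aEnd _ _ _).symm, adj_col_zero j⟩
  · exact ⟨_, _, _, bEnd_ne, (col_ne_bEnd _ _ _).symm, (col_ne_bEnd _ _ _).symm, adj_col_last j⟩
  · refine ⟨_, _, _, ?_, ?_, ?_, adj_col_mid i hi j⟩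
    · intro h; have := (col_inj (by omega) (by omega) h).1; omega
    · intro h; have := (col_inj (by omega) (by omega) h).1; omega
    · intro h; have := (col_inj (by omega) (by omega) h).1; omega

/-- the map from the vertices of `G*` given by columns and ends. -/
def buildF (c : ℕ → Fin 2 → V) (a b : Fin 2 → V) : GStarV s → V
  | Sum.inl i => if h : i.val < 2 then c 0 ⟨i.val, h⟩ else a ⟨i.val - 2, by omega⟩
  | Sum.inr (Sum.inl i) => if h : i.val < 2 then c (s + 1) ⟨i.val, h⟩ else b ⟨i.val - 2, by omega⟩
  | Sum.inr (Sum.inr p) => c (p.1.val + 1) p.2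

theorem buildF_col (c : ℕ → Fin 2 → V) (a b : Fin 2 → V) {i : ℕ} (hi : i ≤ s + 1) (j : Fin 2) :
    buildF c a b (col s i j) = c i j := by
  have h3 : i = 0 ∨ i = s + 1 ∨ ∃ k, k < s ∧ i = k + 1 := by
    rcases Nat.eq_zero_or_pos i with h | h
    · exact Or.inl h
    · by_cases h' : i = s + 1
      · exact Or.inr (Or.inl h')
      · exact Or.inr (Or.inr ⟨i - 1, by omega, by omega⟩)
  rcases h3 with rfl | rfl | ⟨k, hk, rfl⟩
  · rw [col_zero]; simp [buildF]; omega
  · rw [col_last]; simp [buildF]; omega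
  · rw [col_mid k hk]; simp [buildF]

theorem buildF_aEnd (c : ℕ → Fin 2 → V) (a b : Fin 2 → V) (j : Fin 2) :
    buildF c a b (aEnd s j) = a j := by
  simp [buildF, aEnd]

theorem buildF_bEnd (c : ℕ → Fin 2 → V) (a b : Fin 2 → V) (j : Fin 2) :
    buildF c a b (bEnd s j) = b j := by
  simp [buildF, bEnd]

theorem iso_of_map (hcub : ∀ v : V, Nat.card (G.neighborSet v) = 3)
    (hn : Fintype.card V = 2 * s + 8) (f : GStarV s → V) (hf : Function.Surjective f)
    (hadj : ∀ v w, (gStar s).Adj v w → G.Adj (f v) (f w)) : Nonempty (G ≃g gStar s) := by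
  classical
  have hbij : Function.Bijective f := by
    rw [Fintype.bijective_iff_surjective_and_card]
    refine ⟨hf, ?_⟩
    rw [hn]
    simp [GStarV]
    omega
  let e := Equiv.ofBijective f hbij
  have hiff : ∀ v w, G.Adj (f v) (f w) ↔ (gStar s).Adj v w := by
    intro v w
    refine ⟨fun h => ?_, hadj v w⟩
    obtain ⟨x, y, z, hxy, hxz, hyz, hnb⟩ := gs_nbrs v
    have hsub : ({f x, f y, f z} : Finset V) ⊆ nIn G Finset.univ (f v) := by
      intro u hu
      simp only [Finset.mem_insert, Finset.mem_singleton] at hu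
      rw [mem_nIn]
      refine ⟨?_, Finset.mem_univ _⟩
      rcases hu with rfl | rfl | rfl
      · exact hadj _ _ ((hnb _).2 (Or.inl rfl))
      · exact hadj _ _ ((hnb _).2 (Or.inr (Or.inl rfl)))
      · exact hadj _ _ ((hnb _).2 (Or.inr (Or.inr rfl)))
    have hc3 : ({f x, f y, f z} : Finset V).card = 3 := by
      rw [Finset.card_eq_three]
      exact ⟨_, _, _, hbij.1.ne hxy, hbij.1.ne hxz, hbij.1.ne hyz, rfl⟩
    have heq := Finset.eq_of_subset_of_card_le hsub (by
      have := nIn_add_nOut hcub Finset.univ (f v)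
      omega)
    have hw : f w ∈ nIn G Finset.univ (f v) := mem_nIn.2 ⟨h, Finset.mem_univ _⟩
    rw [← heq] at hw
    simp only [Finset.mem_insert, Finset.mem_singleton, hbij.1.eq_iff] at hw
    exact (hnb w).2 hw
  refine ⟨(SimpleGraph.Iso.symm ⟨e, ?_⟩)⟩
  intro v w
  exact hiff v w

theorem forward_iso (hconn : G.Connected) (hbr : ∀ e : Sym2 V, ¬ G.IsBridge e)
    (hcub : ∀ v : V, Nat.card (G.neighborSet v) = 3)
    (hn : Fintype.card V = 2 * s + 8) (hr : (reps G).card = Fintype.card V + 3) :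
    Nonempty (G ≃g gStar s) := by
  classical
  obtain ⟨Q, hQ, hQs⟩ := exists_chain hconn hbr hcub s hn hr
  obtain ⟨c0, r0, a, hst0, hmem0, haa, hac⟩ := base_lemma hcub (X := Q 0)
    (by simpa using (hQ 0 (by omega)).2) (hQ 0 (by omega)).1
  obtain ⟨c, rfl, hst, hcol⟩ := columns hconn hbr hcub s Q hQ hQs hst0 s le_rfl
  obtain ⟨d, t, b, hstd, hmemd, hbb, hbd⟩ := base_lemma hcub (X := (Q s)ᶜ)
    (by rw [Finset.card_compl, (hQ s le_rfl).2, hn]; omega)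
    (by rw [ecut_compl]; exact (hQ s le_rfl).1)
  obtain ⟨hs1, hs2, hs3, hs4⟩ := hst s le_rfl
  obtain ⟨hd1, hd2, hd3, hd4⟩ := hstd
  have hcd : ∀ j, ∃ k, c (s + 1) j = d k ∧ c s j = t k := fun j =>
    hd4 _ (Finset.mem_compl.2 (hs3 j).1) _ (by simpa using hs1 j) (hs3 j).2.symm
  have hdc : ∀ j, ∃ k, d j = c (s + 1) k := by
    intro j
    obtain ⟨k, h1, h2⟩ := hs4 (t j) (by have := (hd3 j).1; simpa using this) (d j)
      (Finset.mem_compl.1 (hd1 j)) (hd3 j).2.symm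
    exact ⟨k, h2⟩
  have hbc : ∀ j k, G.Adj (b j) (c (s + 1) k) := by
    intro j k
    obtain ⟨l, hl, -⟩ := hcd k
    rw [hl]; exact hbd j l
  have hrail : ∀ i ≤ s, ∀ j, G.Adj (c i j) (c (i + 1) j) := fun i hi j => ((hst i hi).2.2.1 j).2
  apply iso_of_map hcub hn (buildF c a b)
  · have hin : ∀ i ≤ s, ∀ v ∈ Q i, ∃ x : GStarV s, buildF c a b x = v := by
      intro i
      induction i with
      | zero =>
        intro _ v hv
        rcases hmem0 v hv with ⟨j, rfl⟩ | ⟨j, rfl⟩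
        · exact ⟨col s 0 j, buildF_col c a b (by omega) j⟩
        · exact ⟨aEnd s j, buildF_aEnd c a b j⟩
      | succ i ih =>
        intro hi v hv
        rcases (hcol i hi).1 v hv with h | ⟨j, rfl⟩
        · exact ih (by omega) v h
        · exact ⟨col s (i + 1) j, buildF_col c a b (by omega) j⟩
    intro v
    by_cases hv : v ∈ Q s
    · exact hin s le_rfl v hv
    · rcases hmemd v (Finset.mem_compl.2 hv) with ⟨j, rfl⟩ | ⟨j, rfl⟩
      · obtain ⟨k, hk⟩ := hdc j
        exact ⟨col s (s + 1) k, by rw [buildF_col c a b (by omega) k, hk]⟩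
      · exact ⟨bEnd s j, buildF_bEnd c a b j⟩
  · have flip : ∀ j : Fin 2, j = 0 ∨ j = 1 := by decide
    intro v w hvw
    rcases gs_cases v with ⟨j, rfl⟩ | ⟨j, rfl⟩ | ⟨j, rfl⟩ | ⟨j, rfl⟩ | ⟨i, j, hi, rfl⟩
    · rw [buildF_aEnd]
      rcases (adj_aEnd j w).1 hvw with rfl | rfl | rfl
      · rw [buildF_col c a b (by omega)]; exact hac _ _
      · rw [buildF_col c a b (by omega)]; exact hac _ _
      · rw [buildF_aEnd]
        rcases flip j with rfl | rfl
        · exact haa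
        · exact haa.symm
    · rw [buildF_bEnd]
      rcases (adj_bEnd j w).1 hvw with rfl | rfl | rfl
      · rw [buildF_col c a b (by omega)]; exact hbc _ _
      · rw [buildF_col c a b (by omega)]; exact hbc _ _
      · rw [buildF_bEnd]
        rcases flip j with rfl | rfl
        · exact hbb
        · exact hbb.symm
    · rw [buildF_col c a b (by omega)]
      rcases (adj_col_zero j w).1 hvw with rfl | rfl | rfl
      · rw [buildF_aEnd]; exact (hac _ _).symm
      · rw [buildF_aEnd]; exact (hac _ _).symm
      · rw [buildF_col c a b (by omega)]; exact hrail 0 (by omega) j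
    · rw [buildF_col c a b (by omega)]
      rcases (adj_col_last j w).1 hvw with rfl | rfl | rfl
      · rw [buildF_bEnd]; exact (hbc _ _).symm
      · rw [buildF_bEnd]; exact (hbc _ _).symm
      · rw [buildF_col c a b (by omega)]; exact (hrail s le_rfl j).symm
    · rw [buildF_col c a b (by omega)]
      rcases (adj_col_mid i hi j w).1 hvw with rfl | rfl | rfl
      · rw [buildF_col c a b (by omega)]; exact (hrail i (by omega) j).symm
      · rw [buildF_col c a b (by omega)]; exact hrail (i + 1) (by omega) j
      · rw [buildF_col c a b (by omega)]
        rcases flip j with rfl | rfl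
        · exact (hcol i hi).2
        · exact (hcol i hi).2.symm

end BuildIso


section CountStar

variable {s : ℕ} {K : Type} [Field K]

theorem gs_edges (p : Sym2 (GStarV s) → Prop)
    (h1 : ∀ i ≤ s, ∀ j, p s(col s i j, col s (i + 1) j))
    (h2 : ∀ i < s, p s(col s (i + 1) 0, col s (i + 1) 1))
    (h3 : ∀ j k, p s(aEnd s j, col s 0 k)) (h4 : p s(aEnd s 0, aEnd s 1))
    (h5 : ∀ j k, p s(bEnd s j, col s (s + 1) k)) (h6 : p s(bEnd s 0, bEnd s 1)) :
    ∀ e ∈ eFin (gStar s), p e := by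
  have flip : ∀ j : Fin 2, j = 0 ∨ j = 1 := by decide
  intro e
  induction e using Sym2.ind with
  | _ v w =>
    intro hvw
    rw [mem_eFin] at hvw
    rcases gs_cases v with ⟨j, rfl⟩ | ⟨j, rfl⟩ | ⟨j, rfl⟩ | ⟨j, rfl⟩ | ⟨i, j, hi, rfl⟩
    · rcases (adj_aEnd j w).1 hvw with rfl | rfl | rfl
      · exact h3 _ _
      · exact h3 _ _
      · rcases flip j with rfl | rfl
        · exact h4
        · rw [Sym2.eq_swap]; exact h4
    · rcases (adj_bEnd j w).1 hvw with rfl | rfl | rfl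
      · exact h5 _ _
      · exact h5 _ _
      · rcases flip j with rfl | rfl
        · exact h6
        · rw [Sym2.eq_swap]; exact h6
    · rcases (adj_col_zero j w).1 hvw with rfl | rfl | rfl
      · rw [Sym2.eq_swap]; exact h3 _ _
      · rw [Sym2.eq_swap]; exact h3 _ _
      · exact h1 0 (by omega) j
    · rcases (adj_col_last j w).1 hvw with rfl | rfl | rfl
      · rw [Sym2.eq_swap]; exact h5 _ _
      · rw [Sym2.eq_swap]; exact h5 _ _
      · rw [Sym2.eq_swap]; exact h1 s le_rfl j
    · rcases (adj_col_mid i hi j w).1 hvw with rfl | rfl | rfl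
      · rw [Sym2.eq_swap]; exact h1 i (by omega) j
      · exact h1 (i + 1) (by omega) j
      · rcases flip j with rfl | rfl
        · exact h2 i hi
        · rw [Sym2.eq_swap]; exact h2 i hi

theorem vertex_sum {φ : Sym2 (GStarV s) → K} (hφ : φ ∈ flowSp K (eFin (gStar s)))
    {v x y z : GStarV s} (hxy : x ≠ y) (hxz : x ≠ z) (hyz : y ≠ z)
    (h : ∀ w, (gStar s).Adj v w ↔ w = x ∨ w = y ∨ w = z) :
    φ s(v, x) + φ s(v, y) + φ s(v, z) = 0 := by
  classical
  rw [mem_flowSp] at hφ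
  have := hφ.2 v
  have h2 : ∑ w, φ s(v, w) = 0 := by
    rw [← sum_incident]
    convert this
  rw [← h2, ← Finset.sum_subset (Finset.subset_univ {x, y, z})]
  · rw [Finset.sum_insert (by simp [hxy, hxz]), Finset.sum_pair hyz, add_assoc]
  · intro w _ hw
    apply hφ.1
    rw [mem_eFin, h]
    simpa using hw

/-- the coordinates of a flow -/
noncomputable def coordX (φ : Sym2 (GStarV s) → K) (i : ℕ) : K := φ s(col s i 0, col s (i + 1) 0)
/-- the coordinates of a flow at the `a` end -/
noncomputable def coordA (φ : Sym2 (GStarV s) → K) (k : Fin 2) : K := φ s(aEnd s 0, col s 0 k)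
/-- the coordinates of a flow at the `b` end -/
noncomputable def coordB (φ : Sym2 (GStarV s) → K) (k : Fin 2) : K := φ s(bEnd s 0, col s (s + 1) k)

theorem flow_rel [CharP K 2] {φ : Sym2 (GStarV s) → K} (hφ : φ ∈ flowSp K (eFin (gStar s))) :
    (∀ i ≤ s, ∀ j, φ s(col s i j, col s (i + 1) j) = coordX φ i) ∧
    (∀ i < s, φ s(col s (i + 1) 0, col s (i + 1) 1) = coordX φ i + coordX φ (i + 1)) ∧
    (∀ k, φ s(aEnd s 1, col s 0 k) = coordA φ k + coordX φ 0) ∧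
    (φ s(aEnd s 0, aEnd s 1) = coordA φ 0 + coordA φ 1) ∧
    (∀ k, φ s(bEnd s 1, col s (s + 1) k) = coordB φ k + coordX φ s) ∧
    (φ s(bEnd s 0, bEnd s 1) = coordB φ 0 + coordB φ 1) := by
  have h2 : ∀ a : K, a + a = 0 := fun a => CharTwo.add_self_eq_zero a
  have flip : ∀ j : Fin 2, j = 0 ∨ j = 1 := by decide
  have hA : ∀ j, φ s(aEnd s j, col s 0 0) + φ s(aEnd s j, col s 0 1) +
      φ s(aEnd s j, aEnd s (1 - j)) = 0 := fun j =>
    vertex_sum hφ (fun h => absurd (col_inj (by omega) (by omega) h).2 (by decide))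
      (col_ne_aEnd _ _ _) (col_ne_aEnd _ _ _) (adj_aEnd j)
  have hB : ∀ j, φ s(bEnd s j, col s (s + 1) 0) + φ s(bEnd s j, col s (s + 1) 1) +
      φ s(bEnd s j, bEnd s (1 - j)) = 0 := fun j =>
    vertex_sum hφ (fun h => absurd (col_inj (by omega) (by omega) h).2 (by decide))
      (col_ne_bEnd _ _ _) (col_ne_bEnd _ _ _) (adj_bEnd j)
  have hC : ∀ j, φ s(col s 0 j, aEnd s 0) + φ s(col s 0 j, aEnd s 1) +
      φ s(col s 0 j, col s 1 j) = 0 := fun j =>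
    vertex_sum hφ aEnd_ne (col_ne_aEnd _ _ _).symm (col_ne_aEnd _ _ _).symm (adj_col_zero j)
  have hD : ∀ j, φ s(col s (s + 1) j, bEnd s 0) + φ s(col s (s + 1) j, bEnd s 1) +
      φ s(col s (s + 1) j, col s s j) = 0 := fun j =>
    vertex_sum hφ bEnd_ne (col_ne_bEnd _ _ _).symm (col_ne_bEnd _ _ _).symm (adj_col_last j)
  have hM : ∀ i, i < s → ∀ j, φ s(col s (i + 1) j, col s i j) +
      φ s(col s (i + 1) j, col s (i + 2) j) + φ s(col s (i + 1) j, col s (i + 1) (1 - j)) = 0 := by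
    intro i hi j
    refine vertex_sum hφ ?_ ?_ ?_ (adj_col_mid i hi j)
    · intro h; have := (col_inj (by omega) (by omega) h).1; omega
    · intro h; have := (col_inj (by omega) (by omega) h).1; omega
    · intro h; have := (col_inj (by omega) (by omega) h).1; omega
  have hA0 := hA 0
  have hA1 := hA 1
  have hB0 := hB 0
  have hB1 := hB 1
  rw [show (1 : Fin 2) - 0 = 1 by decide] at hA0 hB0
  rw [show (1 : Fin 2) - 1 = 0 by decide, Sym2.eq_swap (a := aEnd s 1) (b := aEnd s 0)] at hA1
  rw [show (1 : Fin 2) - 1 = 0 by decide, Sym2.eq_swap (a := bEnd s 1) (b := bEnd s 0)] at hB1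
  have hC' : ∀ j, φ s(aEnd s 0, col s 0 j) + φ s(aEnd s 1, col s 0 j) +
      φ s(col s 0 j, col s 1 j) = 0 := by
    intro j
    rw [← hC j, Sym2.eq_swap (a := aEnd s 0), Sym2.eq_swap (a := aEnd s 1)]
  have hD' : ∀ j, φ s(bEnd s 0, col s (s + 1) j) + φ s(bEnd s 1, col s (s + 1) j) +
      φ s(col s s j, col s (s + 1) j) = 0 := by
    intro j
    rw [← hD j, Sym2.eq_swap (a := bEnd s 0), Sym2.eq_swap (a := bEnd s 1),
      Sym2.eq_swap (a := col s s j)]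
  have hM' : ∀ i, i < s → ∀ j, φ s(col s i j, col s (i + 1) j) +
      φ s(col s (i + 1) j, col s (i + 2) j) + φ s(col s (i + 1) 0, col s (i + 1) 1) = 0 := by
    intro i hi j
    rw [← hM i hi j, Sym2.eq_swap (a := col s i j)]
    rcases flip j with rfl | rfl
    · rfl
    · rw [show (1 : Fin 2) - 1 = 0 by decide, Sym2.eq_swap (a := col s (i + 1) 1) (b := col s (i + 1) 0)]
  have hrail : ∀ i ≤ s, φ s(col s i 1, col s (i + 1) 1) = coordX φ i := by
    intro i
    induction i with
    | zero =>
      intro _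
      have e0 := hC' 0
      have e1 := hC' 1
      simp only [coordX, zero_add]
      linear_combination e0 + e1 - hA0 - hA1 - h2 (φ s(col s 0 0, col s 1 0)) +
        h2 (φ s(aEnd s 0, aEnd s 1))
    | succ i ih =>
      intro hi
      have ih' := ih (by omega)
      have e0 := hM' i (by omega) 0
      have e1 := hM' i (by omega) 1
      rw [ih'] at e1
      simp only [coordX] at e1 ⊢
      linear_combination e1 - e0
  refine ⟨?_, ?_, ?_, ?_, ?_, ?_⟩
  · intro i hi j
    rcases flip j with rfl | rfl
    · rfl
    · exact hrail i hi
  · intro i hi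
    have e := hM' i hi 0
    simp only [coordX]
    linear_combination e - h2 (φ s(col s i 0, col s (i + 1) 0)) -
      h2 (φ s(col s (i + 1) 0, col s (i + 2) 0))
  · intro k
    have e := hC' k
    have e2 : φ s(col s 0 k, col s 1 k) = coordX φ 0 := by
      rcases flip k with rfl | rfl
      · rfl
      · exact hrail 0 (by omega)
    rw [e2] at e
    simp only [coordA]
    linear_combination e - h2 (φ s(aEnd s 0, col s 0 k)) - h2 (coordX φ 0)
  · simp only [coordA]
    linear_combination hA0 - h2 (φ s(aEnd s 0, col s 0 0)) - h2 (φ s(aEnd s 0, col s 0 1))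
  · intro k
    have e := hD' k
    have e2 : φ s(col s s k, col s (s + 1) k) = coordX φ s := by
      rcases flip k with rfl | rfl
      · rfl
      · exact hrail s le_rfl
    rw [e2] at e
    simp only [coordB]
    linear_combination e - h2 (φ s(bEnd s 0, col s (s + 1) k)) - h2 (coordX φ s)
  · simp only [coordB]
    linear_combination hB0 - h2 (φ s(bEnd s 0, col s (s + 1) 0)) - h2 (φ s(bEnd s 0, col s (s + 1) 1))

/-- admissible end labels -/
def okPair (u : K) (P : Fin 2 → K) : Prop := (∀ k, P k ≠ 0) ∧ (∀ k, P k ≠ u) ∧ P 0 ≠ P 1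

/-- admissible rail labels -/
def okChain {n : ℕ} (x : Fin (n + 1) → K) : Prop :=
  (∀ i, x i ≠ 0) ∧ ∀ i : Fin n, x i.castSucc ≠ x i.succ

theorem nz_iff [CharP K 2] {φ : Sym2 (GStarV s) → K} (hφ : φ ∈ flowSp K (eFin (gStar s))) :
    (∀ e ∈ eFin (gStar s), φ e ≠ 0) ↔
      okChain (fun i : Fin (s + 1) => coordX φ i) ∧ okPair (coordX φ 0) (coordA φ) ∧
        okPair (coordX φ s) (coordB φ) := by
  obtain ⟨r1, r2, r3, r4, r5, r6⟩ := flow_rel hφ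
  have flip : ∀ j : Fin 2, j = 0 ∨ j = 1 := by decide
  have hne : ∀ a b : K, a + b ≠ 0 ↔ a ≠ b := fun a b => by rw [Ne, CharTwo.add_eq_zero]
  constructor
  · intro h
    have ha : ∀ j k, φ s(aEnd s j, col s 0 k) ≠ 0 := by
      intro j k
      apply h
      rw [mem_eFin, adj_aEnd]
      rcases flip k with rfl | rfl <;> simp
    have hb : ∀ j k, φ s(bEnd s j, col s (s + 1) k) ≠ 0 := by
      intro j k
      apply h
      rw [mem_eFin, adj_bEnd]
      rcases flip k with rfl | rfl <;> simp
    refine ⟨⟨?_, ?_⟩, ⟨?_, ?_, ?_⟩, ?_, ?_, ?_⟩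
    · intro i
      apply h
      rw [mem_eFin]
      rcases i with ⟨i, hi⟩
      rcases Nat.eq_zero_or_pos i with rfl | hi0
      · rw [adj_col_zero]; simp
      · obtain ⟨t, rfl⟩ : ∃ t, i = t + 1 := ⟨i - 1, by omega⟩
        rw [adj_col_mid _ (by omega)]; simp
    · intro i
      have := h s(col s (i + 1) 0, col s (i + 1) 1) (by
        rw [mem_eFin, adj_col_mid _ i.2]; simp)
      rw [r2 i i.2, hne] at this
      simpa using this
    · intro k; exact ha 0 k
    · intro k; have := ha 1 k; rwa [r3, hne] at this
    · have := h s(aEnd s 0, aEnd s 1) (by rw [mem_eFin, adj_aEnd]; simp)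
      rwa [r4, hne] at this
    · intro k; exact hb 0 k
    · intro k; have := hb 1 k; rwa [r5, hne] at this
    · have := h s(bEnd s 0, bEnd s 1) (by rw [mem_eFin, adj_bEnd]; simp)
      rwa [r6, hne] at this
  · rintro ⟨⟨c1, c2⟩, ⟨a1, a2, a3⟩, b1, b2, b3⟩
    apply gs_edges
    · intro i hi j
      rw [r1 i hi j]
      exact c1 ⟨i, by omega⟩
    · intro i hi
      rw [r2 i hi, hne]
      simpa using c2 ⟨i, hi⟩
    · intro j k
      rcases flip j with rfl | rfl
      · exact a1 k
      · rw [r3, hne]; exact a2 k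
    · rw [r4, hne]; exact a3
    · intro j k
      rcases flip j with rfl | rfl
      · exact b1 k
      · rw [r5, hne]; exact b2 k
    · rw [r6, hne]; exact b3

/-- coordinate map -/
noncomputable def coordMap (s : ℕ) (K : Type) [Field K] :
    flowSp K (eFin (gStar s)) →ₗ[K] (Fin (s + 1) → K) × (Fin 2 → K) × (Fin 2 → K) where
  toFun φ := (fun i => coordX φ.1 i, coordA φ.1, coordB φ.1)
  map_add' a b := rfl
  map_smul' a b := rfl

theorem coordMap_inj [CharP K 2] : Function.Injective (coordMap s K) := by
  rw [injective_iff_map_eq_zero]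
  rintro ⟨φ, hφ⟩ h
  obtain ⟨r1, r2, r3, r4, r5, r6⟩ := flow_rel hφ
  have flip : ∀ j : Fin 2, j = 0 ∨ j = 1 := by decide
  obtain ⟨hx, hab⟩ := Prod.ext_iff.1 h
  obtain ⟨ha, hb⟩ := Prod.ext_iff.1 hab
  have hX : ∀ i ≤ s, coordX φ i = 0 := fun i hi => congrFun hx ⟨i, by omega⟩
  have hA : ∀ k, coordA φ k = 0 := fun k => congrFun ha k
  have hB : ∀ k, coordB φ k = 0 := fun k => congrFun hb k
  have key : ∀ e ∈ eFin (gStar s), φ e = 0 := by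
    apply gs_edges
    · intro i hi j
      rw [r1 i hi j, hX i hi]
    · intro i hi
      rw [r2 i hi, hX i (by omega), hX (i + 1) (by omega), add_zero]
    · intro j k
      rcases flip j with rfl | rfl
      · exact hA k
      · rw [r3, hA, hX 0 (by omega), add_zero]
    · rw [r4, hA, hA, add_zero]
    · intro j k
      rcases flip j with rfl | rfl
      · exact hB k
      · rw [r5, hB, hX s (by omega), add_zero]
    · rw [r6, hB, hB, add_zero]
  apply Subtype.ext
  funext e
  by_cases he : e ∈ eFin (gStar s)
  · exact key e he
  · exact (mem_flowSp.1 hφ).1 e he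

end CountStar


section CountStar2

variable {K : Type} [Field K] [Fintype K]

open Classical in
theorem card_avoid {u : K} (hu : u ≠ 0) :
    ((Finset.univ.filter fun a : K => a ≠ 0 ∧ a ≠ u).card : ℤ) = Fintype.card K - 2 := by
  have h : (Finset.univ.filter fun a : K => a ≠ 0 ∧ a ≠ u) = ({0, u} : Finset K)ᶜ := by
    ext a; simp
  rw [h, Finset.card_compl, Finset.card_pair hu.symm, Nat.cast_sub]
  · rfl
  · rw [← Finset.card_pair hu.symm]; exact Finset.card_le_univ _

open Classical in
theorem card_okPair {u : K} (hu : u ≠ 0) :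
    (∑ P : Fin 2 → K, if okPair u P then (1 : ℤ) else 0) =
      (Fintype.card K - 2) * (Fintype.card K - 3) := by
  set S := (Finset.univ.filter fun a : K => a ≠ 0 ∧ a ≠ u) with hS
  have h1 : (S.offDiag.card : ℤ) = (Fintype.card K - 2) * (Fintype.card K - 3) := by
    rw [Finset.offDiag_card, Nat.cast_sub (Nat.le_mul_self _), Nat.cast_mul, card_avoid hu]
    ring
  rw [← h1, ← Finset.sum_filter, Finset.sum_const, nsmul_eq_mul, mul_one]
  congr 1
  refine Finset.card_bij (fun P _ => (P 0, P 1)) ?_ ?_ ?_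
  · intro P hP
    replace hP : okPair u P := (Finset.mem_filter.1 hP).2
    simp only [Finset.mem_filter, Finset.mem_univ, true_and, hS, Finset.mem_offDiag]
    exact ⟨⟨hP.1 0, hP.2.1 0⟩, ⟨hP.1 1, hP.2.1 1⟩, hP.2.2⟩
  · intro P _ P' _ h
    rw [Prod.ext_iff] at h
    funext k
    fin_cases k
    · exact h.1
    · exact h.2
  · rintro ⟨a, b⟩ h
    simp only [Finset.mem_filter, Finset.mem_univ, true_and, hS, Finset.mem_offDiag] at h
    refine ⟨![a, b], ?_, rfl⟩
    simp only [Finset.mem_filter, Finset.mem_univ, true_and, okPair, Fin.forall_fin_two]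
    simpa using ⟨⟨h.1.1, h.2.1.1⟩, ⟨h.1.2, h.2.1.2⟩, h.2.2⟩

open Classical in
theorem card_okChain (n : ℕ) :
    (∑ x : Fin (n + 1) → K, if okChain x then (1 : ℤ) else 0) =
      (Fintype.card K - 1) * (Fintype.card K - 2) ^ n := by
  induction n with
  | zero =>
    rw [pow_zero, mul_one, ← Equiv.sum_comp (Equiv.funUnique (Fin 1) K).symm]
    have : ∀ a : K, (if okChain ((Equiv.funUnique (Fin 1) K).symm a) then (1 : ℤ) else 0) =
        1 - if a = 0 then 1 else 0 := by
      intro a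
      by_cases h : a = 0 <;> simp [okChain, h]
    rw [Finset.sum_congr rfl fun a _ => this a]
    simp [Finset.sum_sub_distrib]
  | succ n ih =>
    rw [pow_succ, ← mul_assoc, ← ih, ← Equiv.sum_comp (Fin.consEquiv fun _ => K),
      Fintype.sum_prod_type, Finset.sum_comm, Finset.sum_mul]
    refine Finset.sum_congr rfl fun y _ => ?_
    have hiff : ∀ a : K, okChain ((Fin.consEquiv fun _ => K) (a, y)) ↔
        okChain y ∧ (a ≠ 0 ∧ a ≠ y 0) := by
      intro a
      simp only [okChain, Fin.consEquiv_apply, Fin.forall_fin_succ (n := n + 1), Fin.cons_zero,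
        Fin.cons_succ]
      have h : (∀ i : Fin (n + 1), (Fin.cons a y : Fin (n + 2) → K) i.castSucc ≠ y i) ↔
          a ≠ y 0 ∧ ∀ i : Fin n, y i.castSucc ≠ y i.succ := by
        rw [Fin.forall_fin_succ]
        simp only [Fin.castSucc_zero, Fin.cons_zero, Fin.cons_succ, ← Fin.succ_castSucc]
      constructor
      · rintro ⟨⟨h1, h2⟩, h3⟩
        exact ⟨⟨h2, (h.1 h3).2⟩, h1, (h.1 h3).1⟩
      · rintro ⟨⟨h1, h2⟩, h3, h4⟩
        exact ⟨⟨h3, h1⟩, h.2 ⟨h4, h2⟩⟩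
    simp only [hiff]
    by_cases hy : okChain y
    · simp only [hy, true_and, if_true, one_mul]
      rw [← card_avoid (hy.1 0), ← Finset.sum_filter, Finset.sum_const, nsmul_eq_mul, mul_one]
    · simp [hy]

theorem finrank_star [CharP K 2] {s : ℕ} (hconn : (gStar s).Connected)
    (hcub : ∀ v, Nat.card ((gStar s).neighborSet v) = 3) :
    Module.finrank K (flowSp K (eFin (gStar s))) = s + 5 := by
  have h1 := finrank_flowSp K (eFin (gStar s)) (eFin_not_diag (Finset.Subset.refl _))
  have h2 := edges_count hcub
  have h3 : SimpleGraph.fromEdgeSet (↑(eFin (gStar s)) : Set (Sym2 (GStarV s))) = gStar s := by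
    simp [eFin]
  have h4 : Nat.card (gStar s).ConnectedComponent = 1 := by
    rw [Nat.card_eq_one_iff_unique]
    have := hconn.nonempty
    exact ⟨hconn.preconnected.subsingleton_connectedComponent, inferInstance⟩
  have h5 : Fintype.card (GStarV s) = 2 * s + 8 := by simp [GStarV]; omega
  rw [h3, h4] at h1
  omega

theorem eval_star [CharP K 2] {s : ℕ} (hconn : (gStar s).Connected)
    (hcub : ∀ v, Nat.card ((gStar s).neighborSet v) = 3) :
    (flowPoly (gStar s)).eval (Fintype.card K : ℤ) =
      ((Fintype.card K : ℤ) - 1) * (Fintype.card K - 2) ^ (s + 2) * (Fintype.card K - 3) ^ 2 := by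
  classical
  rw [eval_flowPoly_aux]
  have hbij : Function.Bijective (coordMap s K) := by
    refine ⟨coordMap_inj, ?_⟩
    refine (LinearMap.injective_iff_surjective_of_finrank_eq_finrank ?_).1 coordMap_inj
    rw [finrank_star hconn hcub]
    simp
  have hc : (Finset.univ.filter fun φ : Sym2 (GStarV s) → K =>
      φ ∈ flowSp K (eFin (gStar s)) ∧ ∀ e ∈ eFin (gStar s), φ e ≠ 0).card =
      (Finset.univ.filter fun t : (Fin (s + 1) → K) × (Fin 2 → K) × (Fin 2 → K) =>
        okChain t.1 ∧ okPair (t.1 0) t.2.1 ∧ okPair (t.1 (Fin.last s)) t.2.2).card := by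
    refine Finset.card_bij (fun φ h => coordMap s K ⟨φ, (Finset.mem_filter.1 h).2.1⟩) ?_ ?_ ?_
    · intro φ h
      have h' := (Finset.mem_filter.1 h).2
      rw [Finset.mem_filter]
      exact ⟨Finset.mem_univ _, (nz_iff h'.1).1 h'.2⟩
    · intro φ h φ' h' he
      exact congrArg Subtype.val (hbij.1 he)
    · intro t ht
      obtain ⟨⟨φ, hφ⟩, rfl⟩ := hbij.2 t
      rw [Finset.mem_filter] at ht
      exact ⟨φ, Finset.mem_filter.2 ⟨Finset.mem_univ _, hφ, (nz_iff hφ).2 ht.2⟩, rfl⟩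
  refine (congrArg (Nat.cast : ℕ → ℤ) (Eq.trans (by congr!) hc)).trans ?_
  rw [Finset.card_filter]
  push_cast
  rw [Fintype.sum_prod_type]
  have : ∀ x : Fin (s + 1) → K, (∑ y : (Fin 2 → K) × (Fin 2 → K),
      if okChain x ∧ okPair (x 0) y.1 ∧ okPair (x (Fin.last s)) y.2 then (1 : ℤ) else 0) =
      (if okChain x then 1 else 0) * (((Fintype.card K : ℤ) - 2) * (Fintype.card K - 3)) ^ 2 := by
    intro x
    by_cases hx : okChain x
    · simp only [hx, true_and, if_true, one_mul]
      rw [Fintype.sum_prod_type, sq]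
      nth_rw 1 [← card_okPair (hx.1 0)]
      rw [← card_okPair (hx.1 (Fin.last s)), Finset.sum_mul_sum]
      refine Finset.sum_congr rfl fun P _ => Finset.sum_congr rfl fun P' _ => ?_
      by_cases h1 : okPair (x 0) P <;> by_cases h2 : okPair (x (Fin.last s)) P' <;> simp [h1, h2]
    · simp [hx]
  rw [Finset.sum_congr rfl fun x _ => this x, ← Finset.sum_mul, card_okChain]
  ring

theorem flowPoly_star {s : ℕ} (hconn : (gStar s).Connected)
    (hcub : ∀ v, Nat.card ((gStar s).neighborSet v) = 3) :
    flowPoly (gStar s) = (X - 1) * (X - 2) ^ (s + 2) * (X - 3) ^ 2 := by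
  apply Polynomial.eq_of_infinite_eval_eq
  apply Set.infinite_of_injective_forall_mem (f := fun k : ℕ => ((2 : ℤ) ^ (k + 1)))
  · intro a b h
    have := Int.pow_right_injective (le_refl 2) h
    simpa using this
  · intro k
    let F := GaloisField 2 (k + 1)
    let _ : Fintype F := Fintype.ofFinite F
    have hcard : Fintype.card F = 2 ^ (k + 1) := by
      rw [← Nat.card_eq_fintype_card]; exact GaloisField.card 2 (k + 1) (by omega)
    have := eval_star (K := F) hconn hcub
    rw [hcard] at this
    push_cast at this
    simp only [Set.mem_ofPred_eq]
    rw [this]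
    simp

theorem flowPoly_iso {V : Type} [Fintype V] {W : Type} [Fintype W] {G : SimpleGraph V}
    {H : SimpleGraph W} (f : G ≃g H) : flowPoly G = flowPoly H := by
  apply Polynomial.eq_of_infinite_eval_eq
  apply Set.infinite_of_injective_forall_mem (f := fun k : ℕ => ((2 : ℤ) ^ (k + 1)))
  · intro a b h
    have := Int.pow_right_injective (le_refl 2) h
    simpa using this
  · intro k
    let F := GaloisField 2 (k + 1)
    let _ : Fintype F := Fintype.ofFinite F
    have hcard : Fintype.card F = 2 ^ (k + 1) := by
      rw [← Nat.card_eq_fintype_card]; exact GaloisField.card 2 (k + 1) (by omega)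
    have h1 := eval_flowPoly G F
    have h2 := eval_flowPoly H F
    rw [nzf_iso f F, ← h2, hcard] at h1
    push_cast at h1
    exact h1

end CountStar2


section Final

theorem bpoly_coeff (k : ℕ) :
    ((X + 1) * (X + 2) ^ k * (X + 3) ^ 2 : Polynomial ℤ).coeff (k + 2) = 2 * k + 7 := by
  have e1 : (X + 1 : Polynomial ℤ) = X + C 1 := by simp
  have e2 : (X + 2 : Polynomial ℤ) = X + C 2 := by simp
  have e3 : (X + 3 : Polynomial ℤ) = X + C 3 := by simp
  rw [e1, e2, e3]
  have m1 := monic_X_add_C (1 : ℤ)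
  have m2 := (monic_X_add_C (2 : ℤ)).pow k
  have m3 := (monic_X_add_C (3 : ℤ)).pow 2
  have hdeg : ((X + C 1) * (X + C 2) ^ k * (X + C 3) ^ 2 : Polynomial ℤ).natDegree = k + 3 := by
    rw [(m1.mul m2).natDegree_mul m3, m1.natDegree_mul m2, (monic_X_add_C (2 : ℤ)).natDegree_pow,
      (monic_X_add_C (3 : ℤ)).natDegree_pow]
    simp only [natDegree_X_add_C]
    omega
  have hn := nextCoeff_of_natDegree_pos (p := ((X + C 1) * (X + C 2) ^ k * (X + C 3) ^ 2 : Polynomial ℤ))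
    (by omega)
  rw [hdeg, show k + 3 - 1 = k + 2 by omega] at hn
  rw [← hn, (m1.mul m2).nextCoeff_mul m3, m1.nextCoeff_mul m2,
    (monic_X_add_C (2 : ℤ)).nextCoeff_pow, (monic_X_add_C (3 : ℤ)).nextCoeff_pow]
  simp only [nextCoeff_X_add_C, nsmul_eq_mul]
  push_cast
  ring

theorem bpoly_abs (k i : ℕ) :
    ((X + 1) * (X + 2) ^ k * (X + 3) ^ 2 : Polynomial ℤ).coeff i =
      |((X - 1) * (X - 2) ^ k * (X - 3) ^ 2 : Polynomial ℤ).coeff i| := by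
  have hnn : 0 ≤ ((X + 1) * (X + 2) ^ k * (X + 3) ^ 2 : Polynomial ℤ).coeff i := by
    have : ((X + 1) * (X + 2) ^ k * (X + 3) ^ 2 : Polynomial ℤ) =
        ((X + 1) * (X + 2) ^ k * (X + 3) ^ 2 : Polynomial ℕ).map (Nat.castRingHom ℤ) := by
      simp [Polynomial.map_mul, Polynomial.map_pow, Polynomial.map_add]
    rw [this, coeff_map]
    simp
  have hcomp : (((X - 1) * (X - 2) ^ k * (X - 3) ^ 2 : Polynomial ℤ)).comp (-X) =
      C ((-1) ^ (k + 1)) * ((X + 1) * (X + 2) ^ k * (X + 3) ^ 2 : Polynomial ℤ) := by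
    have e : (-X - 2 : Polynomial ℤ) = (-1) * (X + 2) := by ring
    simp only [mul_comp, pow_comp, sub_comp, X_comp, one_comp, ofNat_comp, Nat.cast_ofNat]
    rw [e, mul_pow]
    simp only [map_pow, map_neg, map_one]
    ring
  have hc := congrArg (fun p => |coeff p i|) hcomp
  rw [show (-X : Polynomial ℤ) = C (-1) * X by simp] at hc
  simp only [coeff_C_mul, comp_C_mul_X_coeff, abs_mul, abs_pow, abs_neg, abs_one, one_pow, one_mul,
    mul_one] at hc
  rw [abs_of_nonneg hnn] at hc
  exact hc.symm

end Final

/-- Equality in the lower bound of Theorem 5 holds iff `G ≅ G*`. -/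
theorem stmt_5 {V : Type} [Fintype V] (G : SimpleGraph V)
    (hconn : G.Connected) (hbridgeless : ∀ e : Sym2 V, ¬ G.IsBridge e)
    (hcubic : ∀ v : V, Nat.card (G.neighborSet v) = 3)
    (hreal : ∀ z : ℂ, ((flowPoly G).map (Int.castRingHom ℂ)).IsRoot z → z.im = 0)
    (n m : ℕ) (hn : n = Fintype.card V) (hm : m = edgeCount G)
    (heven : Even n) (hn8 : 8 ≤ n) :
    (∀ i ≤ m - n + 1,
        ((X + 1) * (X + 2) ^ (n / 2 - 2) * (X + 3) ^ 2 : Polynomial ℤ).coeff i =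
          |(flowPoly G).coeff i|) ↔
      Nonempty (G ≃g gStar (n / 2 - 4)) := by

  classical
  have hE := edges_count hcubic
  have hmE : m = (eFin G).card := hm
  obtain ⟨h, hh⟩ := heven
  set s := n / 2 - 4 with hs
  have hns : n = 2 * s + 8 := by omega
  have hm2 : n / 2 - 2 = s + 2 := by omega
  have hmn : m - n = s + 2 + 2 := by omega
  rw [hm2]
  constructor
  · intro hcoef
    apply forward_iso hconn hbridgeless hcubic (by omega)
    have h1 := hcoef (m - n) (by omega)
    have h2 := coeff_flowPoly hconn hbridgeless (by omega)
    rw [← hmE, ← hn] at h2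
    rw [h2, hmn, bpoly_coeff, abs_neg, Nat.abs_cast] at h1
    push_cast at h1
    omega
  · rintro ⟨f⟩ i -
    have hconn' : (gStar s).Connected := f.connected_iff.1 hconn
    have hcub' : ∀ v, Nat.card ((gStar s).neighborSet v) = 3 := by
      intro v
      rw [← hcubic (f.symm v)]
      exact Nat.card_congr (f.symm.mapNeighborSet v)
    rw [flowPoly_iso f, flowPoly_star hconn' hcub']
    exact bpoly_abs (s + 2) i
end

section
/- For every even n ≥ 8, the flow polynomial of the graph G* on n vertices equals F(G*,t) = (t−1)(t−2)^{n/2−2}(t−3)^2. -/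
open Polynomial

section General
open Finset

theorem aux_card {V : Type} [Fintype V] (H : SimpleGraph V) (Q : Type) [Fintype Q] :
    Nat.card {g : V → Q // ∀ u v, H.Adj u v → g u = g v} =
      Nat.card Q ^ Nat.card H.ConnectedComponent := by
  classical
  rw [← Nat.card_fun]
  have hr : ∀ g : V → Q, (∀ u v, H.Adj u v → g u = g v) → ∀ u v, H.Reachable u v → g u = g v := by
    intro g hg u v ⟨p⟩
    induction p with
    | nil => rfl
    | cons h _ ih => exact (hg _ _ h).trans ih
  refine Nat.card_congr ⟨fun g => Quot.lift g.1 (hr g.1 g.2),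
    fun f => ⟨fun v => f (H.connectedComponentMk v), fun u v h =>
      congrArg f (SimpleGraph.ConnectedComponent.sound h.reachable)⟩, ?_, ?_⟩
  · intro g; rfl
  · intro f; funext c; induction c using SimpleGraph.ConnectedComponent.ind; rfl

theorem aux_diag {V Q : Type} (Z : Finset (Sym2 V)) (g : V → Q) :
    (∀ e ∈ Z, (e.map g).IsDiag) ↔
      ∀ u v, (SimpleGraph.fromEdgeSet (↑Z : Set (Sym2 V))).Adj u v → g u = g v := by
  constructor
  · intro h u v huv
    rw [SimpleGraph.fromEdgeSet_adj] at huv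
    simpa using h _ huv.1
  · intro h e
    induction e with
    | h u v =>
      intro he
      by_cases huv : u = v
      · simp [huv]
      · simpa using h u v (by rw [SimpleGraph.fromEdgeSet_adj]; exact ⟨he, huv⟩)

theorem aux_le {V : Type} [Fintype V] (Z : Finset (Sym2 V)) :
    Fintype.card V ≤ Z.card +
      Nat.card (SimpleGraph.fromEdgeSet (↑Z : Set (Sym2 V))).ConnectedComponent := by
  classical
  let φ : (V → ZMod 2) →+ (Z → ZMod 2) :=
    { toFun := fun g e => Sym2.lift ⟨fun u v => g u + g v, fun u v => add_comm _ _⟩ e.1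
      map_zero' := by
        funext ⟨e, he⟩
        induction e with
        | h u v => simp
      map_add' := by
        intro g h
        funext ⟨e, he⟩
        induction e with
        | h u v => simp; ring }
  have h1 := AddSubgroup.card_eq_card_quotient_mul_card_addSubgroup φ.ker
  have h2 : Nat.card ((V → ZMod 2) ⧸ φ.ker) ≤ Nat.card (Z → ZMod 2) := by
    rw [Nat.card_congr (QuotientAddGroup.quotientKerEquivRange φ).toEquiv]
    exact Nat.card_le_card_of_injective _ Subtype.val_injective
  have h3 : Nat.card φ.ker = 2 ^
      Nat.card (SimpleGraph.fromEdgeSet (↑Z : Set (Sym2 V))).ConnectedComponent := by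
    have := aux_card (SimpleGraph.fromEdgeSet (↑Z : Set (Sym2 V))) (ZMod 2)
    rw [Nat.card_zmod] at this
    rw [← this]
    apply Nat.card_congr
    apply Equiv.subtypeEquivRight
    intro g
    rw [← aux_diag, AddMonoidHom.mem_ker]
    constructor
    · intro h e he
      have := congrFun h ⟨e, he⟩
      induction e with
      | h u v =>
        have h' : g u + g v = 0 := this
        simpa using CharTwo.add_eq_zero.1 h'
    · intro h
      funext ⟨e, he⟩
      have := h e he
      induction e with
      | h u v =>
        have h' : g u = g v := by simpa using this
        exact CharTwo.add_eq_zero.2 h'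
  rw [Nat.card_fun, Nat.card_zmod, h3] at h1
  rw [Nat.card_fun, Nat.card_zmod] at h2
  rw [Nat.card_eq_fintype_card (α := V)] at h1
  rw [Nat.card_eq_fintype_card (α := Z), Fintype.card_coe] at h2
  rw [← Nat.pow_le_pow_iff_right (a := 2) (by norm_num), h1, pow_add]
  exact Nat.mul_le_mul_right _ h2

theorem flow_key {V : Type} [Fintype V] [DecidableEq V] (G : SimpleGraph V) (q : ℕ) :
    (q : ℤ) ^ Fintype.card V * (flowPoly G).eval (q : ℤ) =
      ∑ g : V → Fin q, ∏ e ∈ G.edgeSet.toFinite.toFinset,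
        ((q : ℤ) * (if (e.map g).IsDiag then 1 else 0) + (-1)) := by
  simp_rw [Finset.prod_add]
  rw [Finset.sum_comm, flowPoly, eval_finsetSum, Finset.mul_sum]
  refine Finset.sum_congr rfl fun Z hZ => ?_
  rw [Finset.mem_powerset] at hZ
  simp only [Finset.prod_mul_distrib, Finset.prod_const, Finset.card_sdiff_of_subset hZ,
    Finset.prod_boole]
  rw [← Finset.sum_mul, ← Finset.mul_sum]
  have hc : (∑ g : V → Fin q, if ∀ e ∈ Z, (e.map g).IsDiag then (1 : ℤ) else 0) =
      (q : ℤ) ^ Nat.card (SimpleGraph.fromEdgeSet (↑Z : Set (Sym2 V))).ConnectedComponent := by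
    have := aux_card (SimpleGraph.fromEdgeSet (↑Z : Set (Sym2 V))) (Fin q)
    simp_rw [← aux_diag] at this
    rw [Finset.sum_boole, Nat.card_eq_fintype_card, Fintype.card_subtype] at *
    rw [this]; simp
  have hc' : ∀ a b : ℤ, ((q : ℤ) ^ Z.card * ∑ g : V → Fin q,
      if ∀ e ∈ Z, (e.map g).IsDiag then (1 : ℤ) else 0) * a = ((q : ℤ) ^ Z.card * (q : ℤ) ^
      Nat.card (SimpleGraph.fromEdgeSet (↑Z : Set (Sym2 V))).ConnectedComponent) * a := by
    intro a b; rw [hc]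
  refine Eq.trans ?_ (Eq.trans (hc' _ 0).symm (by congr!))
  simp only [eval_smul, eval_pow, eval_X, smul_eq_mul]
  rw [← pow_add, mul_left_comm, ← pow_add, mul_comm, Nat.add_sub_cancel' (aux_le Z)]

end General
section Transfer
open Finset

/-- Potts weight. -/
def pw (q : ℕ) (x y : Fin q) : ℤ := (q : ℤ) * (if x = y then 1 else 0) + (-1)

theorem pw_symm (q : ℕ) (x y : Fin q) : pw q x y = pw q y x := by
  simp [pw, eq_comm]

theorem pw_self (q : ℕ) (x : Fin q) : pw q x x = q - 1 := by
  simp [pw]; ring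

theorem sum_pw (q : ℕ) (x : Fin q) : ∑ y, pw q x y = 0 := by
  simp [pw, Finset.sum_add_distrib]

theorem pw_mul (q : ℕ) (x y c : Fin q) :
    pw q x c * pw q y c = pw q x y * pw q x c - pw q y c + pw q x y := by
  unfold pw
  by_cases h : x = y
  · subst h
    by_cases h' : x = c <;> simp [h'] <;> ring
  · by_cases h' : x = c
    · subst h'
      simp [h, Ne.symm h]
    · by_cases h2 : y = c
      · simp [h, h', h2]; ring
      · simp [h, h', h2]

theorem pw_sq (q : ℕ) (x y : Fin q) :
    pw q x y * pw q x y = (q - 2) * pw q x y + (q - 1) := by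
  unfold pw
  split_ifs <;> ring

theorem sum_pw_pw (q : ℕ) (x z : Fin q) : ∑ y, pw q x y * pw q z y = q * pw q x z := by
  simp_rw [pw_mul]
  simp [Finset.sum_add_distrib, Finset.sum_sub_distrib, ← Finset.mul_sum, sum_pw]

/-- The two-terminal sum of `K4` minus an edge. -/
def hh (q : ℕ) (x y : Fin q) : ℤ :=
  ∑ c, ∑ d, pw q x c * pw q x d * pw q y c * pw q y d * pw q c d

theorem hh_eq (q : ℕ) (x y : Fin q) :
    hh q x y = (q ^ 2 * (q - 2) * (q - 3)) * pw q x y + q ^ 2 * (q - 1) * (q - 2) := by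
  have h1 : ∀ c : Fin q, ∑ d, (pw q x d * pw q y d) * pw q c d =
      q * (pw q x y * pw q x c - pw q y c) := by
    intro c
    have : ∀ d, (pw q x d * pw q y d) * pw q c d =
        pw q x y * (pw q x d * pw q c d) - pw q y d * pw q c d + pw q x y * pw q c d := by
      intro d; rw [pw_mul]; ring
    simp_rw [this]
    rw [Finset.sum_add_distrib, Finset.sum_sub_distrib, ← Finset.mul_sum, ← Finset.mul_sum,
      sum_pw_pw, sum_pw_pw, sum_pw]
    ring
  have h2 : hh q x y = ∑ c, (pw q x c * pw q y c) *
      (q * (pw q x y * pw q x c - pw q y c)) := by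
    unfold hh
    refine Finset.sum_congr rfl fun c _ => ?_
    rw [← h1 c, Finset.mul_sum]
    refine Finset.sum_congr rfl fun d _ => ?_
    ring
  have h3 : ∀ c, (pw q x c * pw q y c) * (q * (pw q x y * pw q x c - pw q y c)) =
      (q * pw q x y * pw q x y) * (pw q x c * pw q x c)
      - (2 * q * pw q x y) * (pw q x c * pw q y c)
      + q * (pw q y c * pw q y c)
      + (q * pw q x y * pw q x y) * pw q x c - (q * pw q x y) * pw q y c := by
    intro c
    linear_combination (q * (pw q x y * pw q x c - pw q y c)) * pw_mul q x y c
  rw [h2]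
  simp_rw [h3]
  simp only [Finset.sum_add_distrib, Finset.sum_sub_distrib, ← Finset.mul_sum, sum_pw,
    sum_pw_pw, pw_self]
  linear_combination (q : ℤ) ^ 2 * (q - 3) * pw_sq q x y

/-- Path of states `x, c 0, …, c (s-1), y, y, …`. -/
def nd {P : Type} {s : ℕ} (x : P) (c : Fin s → P) (y : P) : ℕ → P
  | 0 => x
  | i + 1 => if h : i < s then c ⟨i, h⟩ else y

theorem nd_map {P P' : Type} {s : ℕ} (f : P → P') (x : P) (c : Fin s → P) (y : P) (i : ℕ) :
    f (nd x c y i) = nd (f x) (fun j => f (c j)) (f y) i := by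
  cases i with
  | zero => rfl
  | succ i => simp only [nd]; split_ifs <;> rfl

theorem nd_cons {P : Type} {s : ℕ} (x z : P) (c : Fin s → P) (y : P) (i : ℕ) :
    nd x (Fin.cons z c : Fin (s + 1) → P) y (i + 1) = nd z c y i := by
  cases i with
  | zero => simp [nd]
  | succ i =>
    by_cases h : i < s
    · simp only [nd]
      rw [dif_pos (Nat.succ_lt_succ h), dif_pos h]
      rfl
    · simp [nd, h]

/-- Rail weight. -/
def kk (q : ℕ) (p r : Fin q × Fin q) : ℤ := pw q p.1 r.1 * pw q p.2 r.2

/-- Ladder sum. -/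
def tt (q s : ℕ) (x y : Fin q × Fin q) : ℤ :=
  ∑ c : Fin s → Fin q × Fin q,
    (∏ i : Fin s, pw q (c i).1 (c i).2) *
      ∏ i : Fin (s + 1), kk q (nd x c y i) (nd x c y (i + 1))

theorem tt_zero (q : ℕ) (x y : Fin q × Fin q) : tt q 0 x y = kk q x y := by
  simp [tt, nd]

theorem tt_succ (q s : ℕ) (x y : Fin q × Fin q) :
    tt q (s + 1) x y = ∑ z, kk q x z * pw q z.1 z.2 * tt q s z y := by
  unfold tt
  rw [← (Fin.consEquiv (fun _ => Fin q × Fin q)).sum_comp, Fintype.sum_prod_type]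
  refine Finset.sum_congr rfl fun z _ => ?_
  rw [Finset.mul_sum]
  refine Finset.sum_congr rfl fun c _ => ?_
  rw [Fin.prod_univ_succ, Fin.prod_univ_succ (n := s + 1)]
  simp only [Fin.consEquiv, Equiv.coe_fn_mk, Fin.cons_zero, Fin.cons_succ, Fin.val_zero,
    Fin.val_succ, nd_cons]
  have h0 : nd z c y 0 = z := rfl
  have h1 : nd x (Fin.cons z c : Fin (s + 1) → Fin q × Fin q) y 0 = x := rfl
  rw [h0, h1]
  ring

theorem sum_aff_kk (q : ℕ) (α β : ℤ) (z : Fin q × Fin q) :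
    ∑ x : Fin q × Fin q, (α * pw q x.1 x.2 + β) * kk q x z = α * q ^ 2 * pw q z.1 z.2 := by
  rw [Fintype.sum_prod_type]
  have : ∀ x : Fin q, ∑ y : Fin q, (α * pw q x y + β) * kk q (x, y) z =
      α * q * (pw q z.1 x * pw q z.2 x) := by
    intro x
    have : ∀ y, (α * pw q x y + β) * kk q (x, y) z =
      (α * pw q z.1 x) * (pw q x y * pw q z.2 y) + (β * pw q z.1 x) * pw q z.2 y := by
      intro y; simp only [kk]; rw [pw_symm q z.1 x, pw_symm q z.2 y]; ring
    simp_rw [this]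
    rw [Finset.sum_add_distrib, ← Finset.mul_sum, ← Finset.mul_sum, sum_pw, sum_pw_pw,
      pw_symm q x z.2]
    ring
  simp_rw [this]
  rw [← Finset.mul_sum, sum_pw_pw]
  ring

theorem sum_aff_tt (q s : ℕ) (α β : ℤ) (y : Fin q × Fin q) :
    ∑ x : Fin q × Fin q, (α * pw q x.1 x.2 + β) * tt q s x y =
      α * (q ^ 2 * (q - 2)) ^ s * q ^ 2 * pw q y.1 y.2 := by
  induction s generalizing α β with
  | zero => simp_rw [tt_zero]; rw [sum_aff_kk]; ring
  | succ s ih =>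
    simp_rw [tt_succ, Finset.mul_sum]
    rw [Finset.sum_comm]
    have : ∀ z : Fin q × Fin q, ∑ x : Fin q × Fin q,
        (α * pw q x.1 x.2 + β) * (kk q x z * pw q z.1 z.2 * tt q s z y) =
        ((α * q ^ 2 * (q - 2)) * pw q z.1 z.2 + α * q ^ 2 * (q - 1)) * tt q s z y := by
      intro z
      have : ∀ x : Fin q × Fin q,
        (α * pw q x.1 x.2 + β) * (kk q x z * pw q z.1 z.2 * tt q s z y) =
        (pw q z.1 z.2 * tt q s z y) * ((α * pw q x.1 x.2 + β) * kk q x z) := by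
        intro x; ring
      simp_rw [this]
      rw [← Finset.mul_sum, sum_aff_kk]
      linear_combination (α * q ^ 2 * tt q s z y) * pw_sq q z.1 z.2
    simp_rw [this]
    rw [ih]
    ring

theorem total (q s : ℕ) :
    ∑ y : Fin q × Fin q, ∑ x : Fin q × Fin q, hh q x.1 x.2 * tt q s x y * hh q y.1 y.2 =
      (q : ℤ) ^ (2 * s + 8) * ((q - 1) * (q - 2) ^ (s + 2) * (q - 3) ^ 2) := by
  simp_rw [← Finset.sum_mul, hh_eq, sum_aff_tt]
  rw [Fintype.sum_prod_type]
  have : ∀ x : Fin q, ∑ y : Fin q,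
      (q ^ 2 * (q - 2) * (q - 3) : ℤ) * (q ^ 2 * (q - 2)) ^ s * q ^ 2 * pw q x y *
      ((q ^ 2 * (q - 2) * (q - 3)) * pw q x y + q ^ 2 * (q - 1) * (q - 2)) =
      ((q ^ 2 * (q - 2) * (q - 3) : ℤ) * (q ^ 2 * (q - 2)) ^ s * q ^ 2) *
      (q ^ 2 * (q - 2) * (q - 3)) * (q * (q - 1)) := by
    intro x
    have : ∀ y : Fin q, 
      (q ^ 2 * (q - 2) * (q - 3) : ℤ) * (q ^ 2 * (q - 2)) ^ s * q ^ 2 * pw q x y *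
      ((q ^ 2 * (q - 2) * (q - 3)) * pw q x y + q ^ 2 * (q - 1) * (q - 2)) =
      ((q ^ 2 * (q - 2) * (q - 3) : ℤ) * (q ^ 2 * (q - 2)) ^ s * q ^ 2) *
      (q ^ 2 * (q - 2) * (q - 3)) * (pw q x y * pw q x y) +
      ((q ^ 2 * (q - 2) * (q - 3) : ℤ) * (q ^ 2 * (q - 2)) ^ s * q ^ 2) *
      (q ^ 2 * (q - 1) * (q - 2)) * pw q x y := by
      intro y; ring
    simp_rw [this]
    rw [Finset.sum_add_distrib, ← Finset.mul_sum, ← Finset.mul_sum, sum_pw, sum_pw_pw, pw_self]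
    ring
  simp_rw [this]
  simp only [Finset.sum_const, Finset.card_univ, Fintype.card_fin, nsmul_eq_mul]
  rw [mul_pow, ← pow_mul]
  ring

end Transfer
section Graph
open Finset

/-- Edges of `K4` minus an edge. -/
def pr : Fin 5 → Fin 4 × Fin 4 := ![(0, 2), (0, 3), (1, 2), (1, 3), (2, 3)]

/-- Nodes of the two rails. -/
def node (s : ℕ) (i : ℕ) (ε : Fin 2) : GStarV s :=
  nd (P := Fin 2 → GStarV s) (fun ε => Sum.inl (Fin.castLE (by norm_num) ε))
    (fun i ε => Sum.inr (Sum.inr (i, ε)))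
    (fun ε => Sum.inr (Sum.inl (Fin.castLE (by norm_num) ε))) i ε

/-- Index type of the edges. -/
abbrev EI (s : ℕ) : Type := Fin 5 ⊕ Fin 5 ⊕ Fin s ⊕ (Fin (s + 1) × Fin 2)

/-- The edges. -/
def edg (s : ℕ) : EI s → Sym2 (GStarV s)
  | Sum.inl k => s(Sum.inl (pr k).1, Sum.inl (pr k).2)
  | Sum.inr (Sum.inl k) => s(Sum.inr (Sum.inl (pr k).1), Sum.inr (Sum.inl (pr k).2))
  | Sum.inr (Sum.inr (Sum.inl i)) => s(Sum.inr (Sum.inr (i, 0)), Sum.inr (Sum.inr (i, 1)))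
  | Sum.inr (Sum.inr (Sum.inr p)) => s(node s p.1 p.2, node s (p.1 + 1) p.2)

/-- Level of a vertex. -/
def lev (s : ℕ) : GStarV s → ℕ
  | Sum.inl _ => 0
  | Sum.inr (Sum.inl _) => s + 1
  | Sum.inr (Sum.inr p) => p.1 + 1

/-- Squared index of a vertex. -/
def sqi (s : ℕ) : GStarV s → ℕ
  | Sum.inl i => i.val ^ 2
  | Sum.inr (Sum.inl i) => i.val ^ 2
  | Sum.inr (Sum.inr p) => p.2.val ^ 2

theorem lev_node (s i : ℕ) (ε : Fin 2) (hi : i ≤ s + 1) : lev s (node s i ε) = i := by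
  cases i with
  | zero => rfl
  | succ i =>
    by_cases h : i < s
    · simp [node, nd, h, lev]
    · simp [node, nd, h, lev]; omega

theorem sqi_node (s i : ℕ) (ε : Fin 2) : sqi s (node s i ε) = ε.val ^ 2 := by
  cases i with
  | zero => rfl
  | succ i =>
    by_cases h : i < s
    · simp [node, nd, h, sqi]
    · simp [node, nd, h, sqi]

/-- Sum of a vertex function over the ends of an edge. -/
def ends {V : Type} (f : V → ℕ) : Sym2 V → ℕ :=
  Sym2.lift ⟨fun u v => f u + f v, fun _ _ => add_comm _ _⟩

theorem ends_mk {V : Type} (f : V → ℕ) (u v : V) : ends f s(u, v) = f u + f v := rfl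

theorem pr_inj : ∀ k k' : Fin 5, (pr k).1.val ^ 2 + (pr k).2.val ^ 2 =
    (pr k').1.val ^ 2 + (pr k').2.val ^ 2 → k = k' := by decide

theorem edg_inj (s : ℕ) : Function.Injective (edg s) := by
  intro k k' h
  have h1 := congrArg (ends (lev s)) h
  have h2 := congrArg (ends (sqi s)) h
  have hl : ∀ (i : Fin (s + 1)) ε, lev s (node s i ε) = i :=
    fun i ε => lev_node _ _ _ (by omega)
  have hl' : ∀ (i : Fin (s + 1)) ε, lev s (node s (i + 1) ε) = i + 1 :=
    fun i ε => lev_node _ _ _ (by omega)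
  rcases k with k | k | i | ⟨i, ε⟩ <;> rcases k' with k' | k' | i' | ⟨i', ε'⟩ <;>
    simp only [edg, ends_mk, sqi_node, hl, hl'] at h1 h2 <;>
    (try simp only [lev] at h1) <;> (try simp only [sqi] at h2) <;>
    (try omega)
  · rw [pr_inj _ _ h2]
  · rw [pr_inj _ _ h2]
  · have : i = i' := by ext; omega
    rw [this]
  · have hi : i = i' := by ext; omega
    have he : ε = ε' := by
      clear h h1
      revert h2
      revert ε ε'
      decide
    rw [hi, he]

theorem rel_edge (s : ℕ) (x y : GStarV s) (hne : x ≠ y) (h : gStarRel s x y) :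
    ∃ k, edg s k = s(x, y) := by
  have hp : ∀ i j : Fin 4, i ≠ j → ¬((i = 0 ∧ j = 1) ∨ (i = 1 ∧ j = 0)) →
      ∃ k, ((pr k).1 = i ∧ (pr k).2 = j) ∨ ((pr k).1 = j ∧ (pr k).2 = i) := by decide
  rcases x with i | i | ⟨p, ε⟩ <;> rcases y with j | j | ⟨r, δ⟩ <;> simp only [gStarRel] at h
  · obtain ⟨k, hk⟩ := hp i j (by rintro rfl; exact hne rfl) h
    refine ⟨Sum.inl k, ?_⟩
    rcases hk with ⟨h1, h2⟩ | ⟨h1, h2⟩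
    · simp only [edg, h1, h2]
    · simp only [edg, h1, h2]; exact Sym2.eq_swap
  · obtain ⟨rfl, h⟩ := h
    rcases h with ⟨rfl, rfl⟩ | ⟨rfl, rfl⟩
    · exact ⟨Sum.inr (Sum.inr (Sum.inr (0, 0))), rfl⟩
    · exact ⟨Sum.inr (Sum.inr (Sum.inr (0, 1))), rfl⟩
  · have hs : 0 < s := by have := r.2; omega
    rcases h with ⟨rfl, h, rfl⟩ | ⟨rfl, h, rfl⟩
    · refine ⟨Sum.inr (Sum.inr (Sum.inr (0, 0))), ?_⟩
      have : r = ⟨0, hs⟩ := by ext; exact h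
      subst this
      simp [edg, node, nd, hs]
    · refine ⟨Sum.inr (Sum.inr (Sum.inr (0, 1))), ?_⟩
      have : r = ⟨0, hs⟩ := by ext; exact h
      subst this
      simp [edg, node, nd, hs]
  · obtain ⟨k, hk⟩ := hp i j (by rintro rfl; exact hne rfl) h
    refine ⟨Sum.inr (Sum.inl k), ?_⟩
    rcases hk with ⟨h1, h2⟩ | ⟨h1, h2⟩
    · simp only [edg, h1, h2]
    · simp only [edg, h1, h2]; exact Sym2.eq_swap
  · rcases h with ⟨h, rfl, rfl⟩ | ⟨h, rfl, rfl⟩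
    · refine ⟨Sum.inr (Sum.inr (Sum.inr (⟨p + 1, by omega⟩, 0))), ?_⟩
      have h' : ¬ (p.val + 1 < s) := by omega
      simp [edg, node, nd, h']
    · refine ⟨Sum.inr (Sum.inr (Sum.inr (⟨p + 1, by omega⟩, 1))), ?_⟩
      have h' : ¬ (p.val + 1 < s) := by omega
      simp [edg, node, nd, h']
  · rcases h with ⟨rfl, h⟩ | ⟨rfl, h⟩
    · refine ⟨Sum.inr (Sum.inr (Sum.inl p)), ?_⟩
      have : (ε = 0 ∧ δ = 1) ∨ (ε = 1 ∧ δ = 0) := by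
        clear hne; revert h; revert ε δ; decide
      rcases this with ⟨rfl, rfl⟩ | ⟨rfl, rfl⟩
      · rfl
      · exact Sym2.eq_swap
    · refine ⟨Sum.inr (Sum.inr (Sum.inr (⟨p + 1, by omega⟩, ε))), ?_⟩
      have h' : p.val + 1 < s := by have := r.2; omega
      have : r = ⟨p + 1, h'⟩ := by ext; exact h
      subst this
      simp [edg, node, nd, h']

theorem node_rel (s i : ℕ) (hi : i < s + 1) (ε : Fin 2) :
    gStarRel s (node s i ε) (node s (i + 1) ε) := by
  have h2 : ε = 0 ∨ ε = 1 := by revert ε; decide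
  rcases i with _ | i
  · by_cases hs : 0 < s
    · rcases h2 with rfl | rfl <;> simp [node, nd, hs, gStarRel]
    · have : s = 0 := by omega
      subst this
      rcases h2 with rfl | rfl <;> simp [node, nd, gStarRel]
  · have h' : i < s := by omega
    by_cases hs : i + 1 < s
    · simp [node, nd, hs, h', gStarRel]
    · have : s = i + 1 := by omega
      subst this
      rcases h2 with rfl | rfl <;> simp [node, nd, gStarRel]

theorem edg_mem (s : ℕ) (k : EI s) : edg s k ∈ (gStar s).edgeSet := by
  have hp : ∀ k, (pr k).1 ≠ (pr k).2 ∧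
      ¬(((pr k).1 = 0 ∧ (pr k).2 = 1) ∨ ((pr k).1 = 1 ∧ (pr k).2 = 0)) := by decide
  rcases k with k | k | i | ⟨i, ε⟩ <;>
    simp only [edg, SimpleGraph.mem_edgeSet, gStar, SimpleGraph.fromRel_adj]
  · exact ⟨fun h => (hp k).1 (Sum.inl_injective h), Or.inl (hp k).2⟩
  · exact ⟨fun h => (hp k).1 (Sum.inl_injective (Sum.inr_injective h)), Or.inl (hp k).2⟩
  · exact ⟨by simp, Or.inl (Or.inl ⟨rfl, by simp⟩)⟩
  · refine ⟨fun h => ?_, Or.inl (node_rel s i i.2 ε)⟩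
    have := congrArg (lev s) h
    rw [lev_node _ _ _ (by omega), lev_node _ _ _ (by omega)] at this
    omega

theorem edges_eq (s : ℕ) : (gStar s).edgeSet.toFinite.toFinset = univ.image (edg s) := by
  ext e
  simp only [Set.Finite.mem_toFinset, mem_image, mem_univ, true_and]
  constructor
  · induction e with
    | h x y =>
      intro h
      rw [SimpleGraph.mem_edgeSet, gStar, SimpleGraph.fromRel_adj] at h
      rcases h with ⟨hne, h | h⟩
      · exact rel_edge s x y hne h
      · rw [Sym2.eq_swap]; exact rel_edge s y x hne.symm h
  · rintro ⟨k, rfl⟩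
    exact edg_mem s k

/-- Colourings of the vertices as tuples. -/
def colEquiv (s q : ℕ) : (GStarV s → Fin q) ≃
    ((Fin q × Fin q) × (Fin q × Fin q)) × ((Fin q × Fin q) × (Fin q × Fin q)) ×
      (Fin s → Fin q × Fin q) where
  toFun g := (((g (Sum.inl 0), g (Sum.inl 1)), (g (Sum.inl 2), g (Sum.inl 3))),
    ((g (Sum.inr (Sum.inl 0)), g (Sum.inr (Sum.inl 1))),
      (g (Sum.inr (Sum.inl 2)), g (Sum.inr (Sum.inl 3)))),
    fun i => (g (Sum.inr (Sum.inr (i, 0))), g (Sum.inr (Sum.inr (i, 1)))))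
  invFun t := Sum.elim ![t.1.1.1, t.1.1.2, t.1.2.1, t.1.2.2]
    (Sum.elim ![t.2.1.1.1, t.2.1.1.2, t.2.1.2.1, t.2.1.2.2]
      (fun p => ![(t.2.2 p.1).1, (t.2.2 p.1).2] p.2))
  left_inv g := by
    funext x
    rcases x with i | i | ⟨i, ε⟩
    · fin_cases i <;> rfl
    · fin_cases i <;> rfl
    · fin_cases ε <;> rfl
  right_inv t := rfl

/-- Weight of an edge under a colouring. -/
def ew {V : Type} (q : ℕ) (g : V → Fin q) : Sym2 V → ℤ :=
  Sym2.lift ⟨fun u v => pw q (g u) (g v), fun _ _ => pw_symm _ _ _⟩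

/-- Total weight of a tuple. -/
def wt (s q : ℕ) (t : ((Fin q × Fin q) × (Fin q × Fin q)) ×
    ((Fin q × Fin q) × (Fin q × Fin q)) × (Fin s → Fin q × Fin q)) : ℤ :=
  (pw q t.1.1.1 t.1.2.1 * pw q t.1.1.1 t.1.2.2 * pw q t.1.1.2 t.1.2.1 *
    pw q t.1.1.2 t.1.2.2 * pw q t.1.2.1 t.1.2.2) *
  (pw q t.2.1.1.1 t.2.1.2.1 * pw q t.2.1.1.1 t.2.1.2.2 * pw q t.2.1.1.2 t.2.1.2.1 *
    pw q t.2.1.1.2 t.2.1.2.2 * pw q t.2.1.2.1 t.2.1.2.2) *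
  ((∏ i : Fin s, pw q (t.2.2 i).1 (t.2.2 i).2) *
    ∏ i : Fin (s + 1), kk q (nd t.1.1 t.2.2 t.2.1.1 i) (nd t.1.1 t.2.2 t.2.1.1 (i + 1)))

theorem prod_edges (s q : ℕ) (g : GStarV s → Fin q) :
    ∏ e ∈ (gStar s).edgeSet.toFinite.toFinset,
        ((q : ℤ) * (if (e.map g).IsDiag then 1 else 0) + (-1)) = wt s q (colEquiv s q g) := by
  rw [edges_eq, Finset.prod_image (fun _ _ _ _ h => edg_inj s h)]
  have hnd : ∀ i, nd (g (Sum.inl 0), g (Sum.inl 1))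
      (fun i => (g (Sum.inr (Sum.inr (i, 0))), g (Sum.inr (Sum.inr (i, 1)))))
      (g (Sum.inr (Sum.inl 0)), g (Sum.inr (Sum.inl 1))) i =
      (g (node s i 0), g (node s i 1)) := by
    intro i
    exact (nd_map (P := Fin 2 → GStarV s) (fun z => (g (z 0), g (z 1)))
      (fun ε => Sum.inl (Fin.castLE (by norm_num) ε))
      (fun i ε => Sum.inr (Sum.inr (i, ε)))
      (fun ε => Sum.inr (Sum.inl (Fin.castLE (by norm_num) ε))) i).symm
  have hw : ∀ e : Sym2 (GStarV s),
      ((q : ℤ) * (if (Sym2.map g e).IsDiag then 1 else 0) + (-1)) = ew q g e := by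
    intro e
    induction e with
    | h x y => simp [ew, pw]
  have hm : ∀ x y, ew q g s(x, y) = pw q (g x) (g y) := fun _ _ => rfl
  have hce : colEquiv s q g = (((g (Sum.inl 0), g (Sum.inl 1)), (g (Sum.inl 2), g (Sum.inl 3))),
    ((g (Sum.inr (Sum.inl 0)), g (Sum.inr (Sum.inl 1))),
      (g (Sum.inr (Sum.inl 2)), g (Sum.inr (Sum.inl 3)))),
    fun i => (g (Sum.inr (Sum.inr (i, 0))), g (Sum.inr (Sum.inr (i, 1))))) := rfl
  simp only [hw]
  have h0 : pr 0 = (0, 2) := rfl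
  have h1 : pr 1 = (0, 3) := rfl
  have h2 : pr 2 = (1, 2) := rfl
  have h3 : pr 3 = (1, 3) := rfl
  have h4 : pr 4 = (2, 3) := rfl
  rw [Fintype.prod_sum_type, Fintype.prod_sum_type, Fintype.prod_sum_type,
    Fintype.prod_prod_type]
  simp only [wt, hce, hnd, edg, hm, Fin.prod_univ_five, Fin.prod_univ_two,
    kk, h0, h1, h2, h3, h4]
  ring

theorem main_eval (s q : ℕ) :
    (q : ℤ) ^ (2 * s + 8) * (flowPoly (gStar s)).eval (q : ℤ) =
      (q : ℤ) ^ (2 * s + 8) * ((q - 1) * (q - 2) ^ (s + 2) * (q - 3) ^ 2) := by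
  have h := flow_key (gStar s) q
  have hc : Fintype.card (GStarV s) = 2 * s + 8 := by simp; ring
  rw [hc] at h
  rw [h, ← total]
  simp_rw [prod_edges]
  rw [(colEquiv s q).sum_comp (wt s q), Fintype.sum_prod_type, Fintype.sum_prod_type]
  rw [Finset.sum_comm (s := (univ : Finset (Fin q × Fin q))) (t := univ)
    (f := fun y x => hh q x.1 x.2 * tt q s x y * hh q y.1 y.2)]
  refine Finset.sum_congr rfl fun x _ => ?_
  have hA : ∀ x : Fin q × Fin q, hh q x.1 x.2 = ∑ e : Fin q × Fin q,
      pw q x.1 e.1 * pw q x.1 e.2 * pw q x.2 e.1 * pw q x.2 e.2 * pw q e.1 e.2 := by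
    intro x
    rw [hh, Fintype.sum_prod_type]
  have hI : ∀ e : Fin q × Fin q, (∑ t : ((Fin q × Fin q) × (Fin q × Fin q)) ×
      (Fin s → Fin q × Fin q), wt s q ((x, e), t)) =
      (pw q x.1 e.1 * pw q x.1 e.2 * pw q x.2 e.1 * pw q x.2 e.2 * pw q e.1 e.2) *
        ∑ y, tt q s x y * hh q y.1 y.2 := by
    intro e
    rw [Fintype.sum_prod_type, Fintype.sum_prod_type, Finset.mul_sum]
    refine Finset.sum_congr rfl fun y _ => ?_
    rw [hA y, Finset.mul_sum, Finset.mul_sum]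
    refine Finset.sum_congr rfl fun f _ => ?_
    rw [tt, Finset.sum_mul, Finset.mul_sum]
    refine Finset.sum_congr rfl fun c _ => ?_
    simp only [wt]
    ring
  simp_rw [hI]
  rw [← Finset.sum_mul, ← hA, Finset.mul_sum]
  refine Finset.sum_congr rfl fun y _ => ?_
  ring

end Graph

/-- The flow polynomial of `G*` on `n` vertices is `(t−1)(t−2)^{n/2−2}(t−3)^2`. -/
theorem stmt_6 (n : ℕ) (heven : Even n) (hn8 : 8 ≤ n) :
    flowPoly (gStar (n / 2 - 4)) =
      (X - 1) * (X - 2) ^ (n / 2 - 2) * (X - 3) ^ 2 := by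
  obtain ⟨m, rfl⟩ := heven
  obtain ⟨s, rfl⟩ : ∃ s, m = s + 4 := ⟨m - 4, by omega⟩
  have e1 : (s + 4 + (s + 4)) / 2 - 4 = s := by omega
  have e2 : (s + 4 + (s + 4)) / 2 - 2 = s + 2 := by omega
  rw [e1, e2]
  apply Polynomial.eq_of_infinite_eval_eq
  refine Set.Infinite.mono (s := Set.range fun k : ℕ => ((k + 1 : ℕ) : ℤ)) ?_
    (Set.infinite_range_of_injective fun a b h => by simpa using h)
  rintro _ ⟨k, rfl⟩
  have h := mul_left_cancel₀ (pow_ne_zero _ (by positivity)) (main_eval s (k + 1))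
  rw [Set.mem_setOf_eq, h]
  simp
end
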